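/- Let r ≥ 3 and q = p^h > 4 with p prime, h ≥ 1, and let V be a quasi-Hermitian variety of PG(r,q^2) whose characteristic vector v^V belongs to C_p. Let π be a plane of PG(r,q^2) with |π ∩ V| ≤ q^3 + 2q^2 such that every line of π meets π ∩ V in at most q+1 points. Then π ∩ V is a classical unital of π; in particular |π ∩ V| = q^3 + 1. -/

import Mathlib

/-!
Common framework: `ProjPoint F n` is the set of points of the projective space
PG(n-1, |F|) (so PG(r, q²) corresponds to `n = r + 1` and `Fintype.card F = q ^ 2`).
Projective subspaces of projective dimension `k` are the submodules of `Fin n → F`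
of `finrank` equal to `k + 1`; lines have finrank 2, planes finrank 3 and
hyperplanes finrank `n - 1 = r`.
-/

open Module Matrix

/-- The points of the projective space PG(n-1, |F|): one-dimensional subspaces
of `F^n`. -/
def ProjPoint (F : Type) [Field F] (n : ℕ) : Type :=
  {W : Submodule F (Fin n → F) // finrank F W = 1}

/-- The set of projective points lying in a given subspace `W`. -/
def pointsIn (F : Type) [Field F] (n : ℕ) (W : Submodule F (Fin n → F)) :
    Set (ProjPoint F n) :=
  {P | P.1 ≤ W}

/-- The number of points of `V` lying in the subspace `W`. -/
noncomputable def secant (F : Type) [Field F] (n : ℕ) (V : Set (ProjPoint F n))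
    (W : Submodule F (Fin n → F)) : ℕ :=
  (V ∩ pointsIn F n W).ncard

/-- The characteristic vector of a set of projective points, with values in `F_p`. -/
noncomputable def charVec (F : Type) [Field F] (p n : ℕ) (S : Set (ProjPoint F n)) :
    ProjPoint F n → ZMod p :=
  Set.indicator S 1

/-- `C_p`: the `F_p`-code spanned by the characteristic vectors of hyperplanes. -/
def hypCode (F : Type) [Field F] (p n : ℕ) :
    Submodule (ZMod p) (ProjPoint F n → ZMod p) :=
  Submodule.span (ZMod p)
    {v | ∃ H : Submodule F (Fin n → F), finrank F H = n - 1 ∧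
      v = charVec F p n (pointsIn F n H)}

/-- A quasi-Hermitian variety of PG(r, q²): it has the size of a non-singular
Hermitian variety and the same two intersection numbers with hyperplanes.
(All identities are stated multiplied through by `q² - 1`.) -/
def IsQuasiHermitian (F : Type) [Field F] (q r : ℕ)
    (V : Set (ProjPoint F (r + 1))) : Prop :=
  (V.ncard : ℤ) * ((q : ℤ) ^ 2 - 1)
      = ((q : ℤ) ^ (r + 1) + (-1) ^ r) * ((q : ℤ) ^ r - (-1) ^ r) ∧
  ∀ H : Submodule F (Fin (r + 1) → F), finrank F H = r →
    ((secant F (r + 1) V H : ℤ) * ((q : ℤ) ^ 2 - 1)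
        = ((q : ℤ) ^ r + (-1) ^ (r - 1)) * ((q : ℤ) ^ (r - 1) - (-1) ^ (r - 1)) ∨
     (secant F (r + 1) V H : ℤ) * ((q : ℤ) ^ 2 - 1)
        = ((q : ℤ) ^ 2 - 1)
          + (q : ℤ) ^ 2 * (((q : ℤ) ^ (r - 1) + (-1) ^ r) * ((q : ℤ) ^ (r - 2) - (-1) ^ r)))

/-- The zero set, in PG(n-1,|F|), of the Hermitian form `x ↦ xᵀ A x^(q)`. -/
def hermSet (F : Type) [Field F] (q n : ℕ) (A : Matrix (Fin n) (Fin n) F) :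
    Set (ProjPoint F n) :=
  {P | ∀ x ∈ P.1, ∑ i, ∑ j, x i * A i j * (x j) ^ q = 0}

/-- A non-singular Hermitian variety of PG(n-1, q²). -/
def IsNonsingHermitian (F : Type) [Field F] (q n : ℕ)
    (V : Set (ProjPoint F n)) : Prop :=
  ∃ A : Matrix (Fin n) (Fin n) F, IsUnit A.det ∧
    Aᵀ = A.map (fun a => a ^ q) ∧ V = hermSet F q n A

/-- A singular Hermitian variety of PG(n-1, q²) whose singular space (the radical
of the Hermitian form) has projective dimension `d`. -/
def IsSingularHermitian (F : Type) [Field F] (q n d : ℕ)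
    (S : Set (ProjPoint F n)) : Prop :=
  ∃ A : Matrix (Fin n) (Fin n) F,
    Aᵀ = A.map (fun a => a ^ q) ∧
    finrank F (LinearMap.ker (Matrix.toLin' Aᵀ)) = d + 1 ∧
    S = hermSet F q n A

/-- A `d`-singular quasi-Hermitian variety of PG(r, q²). -/
def IsSingularQuasiHermitian (F : Type) [Field F] (q r d : ℕ)
    (S : Set (ProjPoint F (r + 1))) : Prop :=
  ∃ S₀ : Set (ProjPoint F (r + 1)), IsSingularHermitian F q (r + 1) d S₀ ∧
    S.ncard = S₀.ncard ∧
    ∀ H : Submodule F (Fin (r + 1) → F), finrank F H = r →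
      ∃ H₀ : Submodule F (Fin (r + 1) → F), finrank F H₀ = r ∧
        secant F (r + 1) S H = secant F (r + 1) S₀ H₀

/-- `U` is a classical unital (Hermitian curve) of the plane `π` of PG(n-1, q²):
in some coordinatization `e` of `π`, it is the zero set of a non-degenerate
Hermitian form on `F³`. -/
def IsClassicalUnital (F : Type) [Field F] (q n : ℕ)
    (π : Submodule F (Fin n → F)) (U : Set (ProjPoint F n)) : Prop :=
  ∃ e : (Fin 3 → F) →ₗ[F] (Fin n → F), LinearMap.ker e = ⊥ ∧ LinearMap.range e = π ∧
    ∃ A : Matrix (Fin 3) (Fin 3) F, IsUnit A.det ∧ Aᵀ = A.map (fun a => a ^ q) ∧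
      U = {P | ∃ y : Fin 3 → F, y ≠ 0 ∧ P.1 = Submodule.span F {e y} ∧
        ∑ i, ∑ j, y i * A i j * (y j) ^ q = 0}

/-!
A codeword of `C_p` inherits two properties from the hyperplanes: every line meets it in `1 mod p`
points, and the power sums of the coordinates of its points on the lines of a planar pencil are
polynomials in the parameter of the pencil, of degree at most the exponent. The determinant of a
Hankel matrix of such power sums is a polynomial in the parameter that vanishes to high order at
every line with few points; comparing with its degree shows that a plane section with at most
`q + 1` points on each line has at least `q ^ 3 + 1` points, and counting over all lines shows that
it has no more. So the section is a unital.

The first moment is additive along a pencil, hence the points where it vanishes on the lines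
through `R ∉ U` form a line, which contains the feet of the tangents through `R`. Conversely, if
the moment vanishes on a secant with coordinate `x` along `R`, then so does the sum of the `x⁻¹`, a
coefficient of the nodal polynomials; this makes the correspondence between points and these lines
symmetric, that is, a polarity whose absolute points are the points of the unital. In self-polar
coordinates a polarity is given by a field automorphism of order at most `2`, and it is nontrivial
because secants have more than two points: the unital is Hermitian.
-/

section PolynomialDeterminants

open Polynomial

theorem pow_card_dvd_det_of_rows {R m : Type*} [CommRing R] [Fintype m] [DecidableEq m]
    {A : Matrix m m R} {c : R} {Z : Finset m} (h : ∀ i ∈ Z, ∀ j, c ∣ A i j) :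
    c ^ Z.card ∣ A.det := by
  have hfactor : ∀ i j, ∃ b, A i j = (if i ∈ Z then c else 1) * b := by
    intro i j
    split_ifs with hi
    · exact h i hi j
    · exact ⟨A i j, (one_mul _).symm⟩
  choose B hB using hfactor
  have hA : A = Matrix.of fun i j ↦ (if i ∈ Z then c else 1) * Matrix.of B i j := by
    ext i j
    exact hB i j
  rw [hA, Matrix.det_mul_column, Finset.prod_ite_mem, Finset.univ_inter, Finset.prod_const]
  exact dvd_mul_right _ _

theorem X_sub_C_pow_dvd_det {F m : Type*} [Field F] [Fintype m] [DecidableEq m]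
    (A : Matrix m m F[X]) (y : F) :
    (X - C y) ^ (Fintype.card m - (A.map (eval y)).rank) ∣ A.det := by
  classical
  obtain ⟨L, L', d, hd⟩ :=
    Matrix.Pivot.exists_list_transvec_mul_mul_list_transvec_eq_diagonal (A.map (eval y))
  set P := (L.map Matrix.TransvectionStruct.toMatrix).prod
  set P' := (L'.map Matrix.TransvectionStruct.toMatrix).prod
  have hP : P.det = 1 := Matrix.TransvectionStruct.det_toMatrix_prod L
  have hP' : P'.det = 1 := Matrix.TransvectionStruct.det_toMatrix_prod L'
  have hmapC (M : Matrix m m F) (hM : M.det = 1) : (C.mapMatrix M).det = 1 := by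
    rw [← RingHom.map_det, hM, map_one]
  let B := C.mapMatrix P * A * C.mapMatrix P'
  have hdet : B.det = A.det := by
    rw [Matrix.det_mul, Matrix.det_mul, hmapC P hP, hmapC P' hP', one_mul, mul_one]
  have heval : (evalRingHom y).mapMatrix B = Matrix.diagonal d := by
    have hC (M : Matrix m m F) : (evalRingHom y).mapMatrix (C.mapMatrix M) = M := by
      ext i j
      simp
    rw [map_mul, map_mul, hC, hC, ← hd]
    rfl
  let Z := Finset.univ.filter fun i ↦ d i = 0
  have hrank : Fintype.card m - (A.map (eval y)).rank ≤ Z.card := by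
    have hdiag : (Matrix.diagonal d).rank ≤ (A.map (eval y)).rank :=
      hd ▸ (Matrix.rank_mul_le_left _ _).trans (Matrix.rank_mul_le_right _ _)
    rw [Matrix.rank_diagonal, Fintype.card_subtype] at hdiag
    have := Finset.card_filter_add_card_filter_not (s := Finset.univ) (fun i ↦ d i = 0)
    rw [Finset.card_univ] at this
    simp only [Z, ne_eq] at hdiag ⊢
    omega
  have hdvd : ∀ i ∈ Z, ∀ j, X - C y ∣ B i j := by
    intro i hi j
    have hBij : (B i j).eval y = Matrix.diagonal d i j := congrFun (congrFun heval i) j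
    have hdi : d i = 0 := by simpa [Z] using hi
    rw [dvd_iff_isRoot, IsRoot.def, hBij, Matrix.diagonal_apply]
    split_ifs
    exacts [hdi, rfl]
  exact (pow_dvd_pow _ hrank).trans (hdet ▸ pow_card_dvd_det_of_rows hdvd)

theorem natDegree_det_le_sum_add_sum {R m : Type*} [CommRing R] [Fintype m] [DecidableEq m]
    {A : Matrix m m R[X]} {f g : m → ℕ} (h : ∀ i j, (A i j).natDegree ≤ f i + g j) :
    A.det.natDegree ≤ ∑ i, f i + ∑ i, g i := by
  rw [Matrix.det_apply]
  refine natDegree_sum_le_of_forall_le _ _ fun σ _ ↦ (natDegree_smul_le _ _).trans ?_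
  calc (∏ i, A (σ i) i).natDegree
      ≤ ∑ i, (A (σ i) i).natDegree := natDegree_prod_le _ _
    _ ≤ ∑ i, (f (σ i) + g i) := Finset.sum_le_sum fun i _ ↦ h _ _
    _ = ∑ i, f i + ∑ i, g i := by rw [Finset.sum_add_distrib, Equiv.sum_comp σ f]

/-- The `s × s` Hankel matrix of the power sums of a finite set of scalars. -/
def powerSumHankel {F : Type*} [Field F] (S : Finset F) (s : ℕ) : Matrix (Fin s) (Fin s) F :=
  Matrix.of fun i j ↦ ∑ x ∈ S, x ^ (i + j : ℕ)

theorem powerSumHankel_eq_transpose_mul {F ι : Type*} [Field F] [Fintype ι] {S : Finset F}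
    (e : ι ≃ S) (s : ℕ) :
    powerSumHankel S s = (Matrix.rectVandermonde (fun i ↦ (e i : F)) 1 s)ᵀ *
      Matrix.rectVandermonde (fun i ↦ (e i : F)) 1 s := by
  ext i j
  simp only [powerSumHankel, Matrix.of_apply, Matrix.mul_apply, Matrix.transpose_apply,
    Matrix.rectVandermonde_apply, Pi.one_apply, one_pow, mul_one, ← pow_add]
  rw [← Finset.sum_coe_sort, ← Equiv.sum_comp e]

theorem rank_powerSumHankel_le {F : Type*} [Field F] (S : Finset F) (s : ℕ) :
    (powerSumHankel S s).rank ≤ S.card := by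
  rw [powerSumHankel_eq_transpose_mul (Equiv.refl S)]
  exact (Matrix.rank_mul_le_right _ _).trans
    ((Matrix.rank_le_card_height _).trans (Fintype.card_coe S).le)

theorem det_powerSumHankel_ne_zero {F : Type*} [Field F] (S : Finset F) :
    (powerSumHankel S S.card).det ≠ 0 := by
  have hV : Matrix.rectVandermonde (fun i ↦ (S.equivFin.symm i : F)) 1 S.card =
      Matrix.vandermonde fun i ↦ (S.equivFin.symm i : F) := by
    ext i j
    simp [Matrix.rectVandermonde_apply, Matrix.vandermonde_apply]
  rw [powerSumHankel_eq_transpose_mul S.equivFin.symm, hV, Matrix.det_mul, Matrix.det_transpose]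
  exact mul_self_ne_zero.2 (Matrix.det_vandermonde_ne_zero_iff.2
    (Subtype.val_injective.comp S.equivFin.symm.injective))

/-- The determinant of the Hankel matrix of power sums is a polynomial in the parameter of degree
at most `s * (s - 1)`, and each parameter `y` is a root of multiplicity at least `s - #(S y)`. -/
theorem sum_sub_card_le_of_powerSums {F : Type*} [Field F] {s : ℕ} {S : F → Finset F} {y₀ : F}
    {Y : Finset F} (hy₀ : (S y₀).card = s)
    (hS : ∀ k ≤ 2 * s - 2, ∃ P : F[X], P.natDegree ≤ k ∧ ∀ y, P.eval y = ∑ x ∈ S y, x ^ k) :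
    ∑ y ∈ Y, (s - (S y).card) ≤ s * (s - 1) := by
  choose! P hdeg heval using hS
  have hle (i j : Fin s) : (i + j : ℕ) ≤ 2 * s - 2 := by omega
  let A : Matrix (Fin s) (Fin s) F[X] := Matrix.of fun i j ↦ P (i + j)
  have hA (y : F) : A.map (eval y) = powerSumHankel (S y) s := by
    ext i j
    exact heval _ (hle i j) y
  have hdvd (y : F) : (X - C y) ^ (s - (S y).card) ∣ A.det := by
    refine (pow_dvd_pow _ ?_).trans (X_sub_C_pow_dvd_det A y)
    rw [hA, Fintype.card_fin]
    exact Nat.sub_le_sub_left (rank_powerSumHankel_le _ _) _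
  have hdet : A.det ≠ 0 := by
    intro h
    have heq : (powerSumHankel (S y₀) s).det = A.det.eval y₀ := by
      rw [← hA]
      exact ((evalRingHom y₀).map_det A).symm
    subst hy₀
    exact det_powerSumHankel_ne_zero (S y₀) (by rw [heq, h, eval_zero])
  have hprod : ∏ y ∈ Y, (X - C y) ^ (s - (S y).card) ∣ A.det :=
    Finset.prod_dvd_of_coprime
      (fun _ _ _ _ hab ↦ (pairwise_coprime_X_sub_C Function.injective_id hab).pow)
      fun y _ ↦ hdvd y
  calc ∑ y ∈ Y, (s - (S y).card) = (∏ y ∈ Y, (X - C y) ^ (s - (S y).card)).natDegree := by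
        rw [natDegree_prod_of_monic _ _ fun y _ ↦ (monic_X_sub_C y).pow _]
        simp only [natDegree_pow, natDegree_X_sub_C, mul_one]
    _ ≤ A.det.natDegree := natDegree_le_of_dvd hprod hdet
    _ ≤ ∑ i : Fin s, (i : ℕ) + ∑ i : Fin s, (i : ℕ) :=
        natDegree_det_le_sum_add_sum fun i j ↦ hdeg _ (hle i j)
    _ = s * (s - 1) := by
        rw [Fin.sum_univ_eq_sum_range (fun i ↦ i), ← mul_two, Finset.sum_range_id_mul_two]

end PolynomialDeterminants

section NodalPolynomials

open Polynomial Lagrange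

variable {F : Type*} [Field F]

theorem exists_eq_nodal_mul {T : Finset F} {P : F[X]} {k : ℕ} (hP : ∀ y ∈ T, P.eval y = 0)
    (hdeg : P.natDegree ≤ T.card + k) :
    ∃ R : F[X], R.natDegree ≤ k ∧ P = nodal T id * R := by
  have hdvd : nodal T id ∣ P :=
    Finset.prod_dvd_of_coprime
      (fun _ _ _ _ hab ↦ pairwise_coprime_X_sub_C Function.injective_id hab)
      fun y hy ↦ dvd_iff_isRoot.2 (hP y hy)
  obtain ⟨R, rfl⟩ := hdvd
  refine ⟨R, ?_, rfl⟩
  by_cases hR : R = 0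
  · simp [hR]
  · rw [nodal_monic.natDegree_mul' hR, natDegree_nodal] at hdeg
    omega

theorem eval_derivative_nodal_ne_zero {T : Finset F} {y : F} (hy : y ∈ T) :
    (derivative (nodal T id)).eval y ≠ 0 := by
  classical
  have h := eval_nodal_derivative_eval_node_eq (v := id) hy
  simp only [id_eq] at h
  rw [h]
  exact eval_nodal_not_at_node fun z hz ↦ (Finset.ne_of_mem_erase hz).symm

theorem eq_zero_of_forall_eval_eq_zero_of_eval_derivative_eq_zero {Z : Finset F} {g : F[X]} {y₀ : F}
    (hy₀ : y₀ ∈ Z) (hZ : ∀ y ∈ Z, g.eval y = 0) (hder : (derivative g).eval y₀ = 0)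
    (hdeg : g.natDegree ≤ Z.card) : g = 0 := by
  obtain ⟨R, hR, rfl⟩ := exists_eq_nodal_mul (k := 0) hZ hdeg
  rw [eq_C_of_natDegree_le_zero hR] at hder ⊢
  have h : (derivative (nodal Z id)).eval y₀ * R.coeff 0 = 0 := by
    simpa [derivative_mul] using hder
  rw [(mul_eq_zero.1 h).resolve_left (eval_derivative_nodal_ne_zero hy₀), C_0, mul_zero]

theorem eval_nodal_id_eq_zero_iff {S : Finset F} {x : F} : (nodal S id).eval x = 0 ↔ x ∈ S := by
  simp [eval_nodal, Finset.prod_eq_zero_iff, sub_eq_zero]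

theorem sum_coeff_nodal_mul_powerSum (S : Finset F) (j : ℕ) :
    ∑ m ∈ Finset.range (S.card + 1),
      (nodal S id).coeff (S.card - m) * ∑ x ∈ S, x ^ (S.card - m + j) = 0 := by
  have hterm (x : F) (hx : x ∈ S) :
      ∑ m ∈ Finset.range (S.card + 1), (nodal S id).coeff m * x ^ (m + j) = 0 := by
    have hroot : (nodal S id).eval x = 0 := eval_nodal_id_eq_zero_iff.2 hx
    rw [eval_eq_sum_range, natDegree_nodal] at hroot
    simp_rw [pow_add, ← mul_assoc, ← Finset.sum_mul, hroot, zero_mul]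
  have hreflect := Finset.sum_range_reflect
    (fun m ↦ (nodal S id).coeff m * ∑ x ∈ S, x ^ (m + j)) (S.card + 1)
  rw [Nat.add_sub_cancel] at hreflect
  rw [hreflect]
  simp_rw [Finset.mul_sum]
  rw [Finset.sum_comm]
  exact Finset.sum_eq_zero hterm

theorem coeff_one_nodal {S : Finset F} (h0 : 0 ∉ S) :
    (nodal S id).coeff 1 = -(nodal S id).coeff 0 * ∑ x ∈ S, x⁻¹ := by
  classical
  have hcoeff : (nodal S id).coeff 1 = (derivative (nodal S id)).eval 0 := by
    rw [← coeff_zero_eq_eval_zero, coeff_derivative]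
    simp
  rw [hcoeff, derivative_nodal, eval_finsetSum, Finset.mul_sum, coeff_zero_eq_eval_zero]
  refine Finset.sum_congr rfl fun x hx ↦ ?_
  have hx0 : x ≠ 0 := ne_of_mem_of_not_mem hx h0
  rw [nodal_eq_mul_nodal_erase hx]
  simp only [id_eq, eval_mul, eval_sub, eval_X, eval_C, zero_sub]
  field_simp

theorem exists_polynomial_of_convolution {Y : Set F} {a : F → ℕ → F} {R : ℕ → F[X]} {c : F} {n : ℕ}
    (hc : c ≠ 0) (hR0 : R 0 = C c) (hR : ∀ k ≤ n, (R k).natDegree ≤ k) (ha0 : ∀ y ∈ Y, a y 0 = 1)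
    (ha : ∀ y ∈ Y, ∀ j, 1 ≤ j → j ≤ n →
      ∑ m ∈ Finset.range (j + 1), a y m * (R (j - m)).eval y = 0) :
    ∀ j ≤ n, ∃ d : F[X], d.natDegree ≤ j ∧ ∀ y ∈ Y, a y j = d.eval y := by
  intro j
  induction j using Nat.strong_induction_on with
  | _ j ih =>
    intro hj
    rcases Nat.eq_zero_or_pos j with rfl | hj0
    · exact ⟨1, by simp, by simpa using ha0⟩
    have ih' : ∀ m ∈ Finset.range j, ∃ d : F[X], d.natDegree ≤ m ∧ ∀ y ∈ Y, a y m = d.eval y :=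
      fun m hm ↦ ih m (Finset.mem_range.1 hm) ((Finset.mem_range.1 hm).le.trans hj)
    choose! d hdeg hd using ih'
    refine ⟨C (-c⁻¹) * ∑ m ∈ Finset.range j, d m * R (j - m), ?_, fun y hy ↦ ?_⟩
    · refine (natDegree_C_mul_le _ _).trans (natDegree_sum_le_of_forall_le _ _ fun m hm ↦ ?_)
      have hdm := hdeg m hm
      have hRm := hR (j - m) (by omega)
      rw [Finset.mem_range] at hm
      exact natDegree_mul_le.trans (by omega)
    · have hsum := ha y hy j hj0 hj
      rw [Finset.sum_range_succ, Nat.sub_self, hR0, eval_C,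
        Finset.sum_congr rfl fun m hm ↦ by rw [hd m hm y hy]] at hsum
      rw [eval_mul, eval_C, eval_finsetSum]
      simp only [eval_mul]
      field_simp
      linear_combination hsum

end NodalPolynomials

section TangentFamilies

open Polynomial Lagrange

/-- The sets `S y = {x | x • R + (y • A + B) ∈ U}` cut out by a unital `U` on the lines through a
point `R` off `U`, indexed by a parameter `y`; the lines with `y ∈ T` are tangent to `U` at a point
with `x = 0`. -/
structure IsTangentFamily {F : Type*} [Field F] [Fintype F] (q : ℕ) (T : Finset F)
    (S : F → Finset F) : Prop where
  three_le : 3 ≤ q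
  card_field : Fintype.card F = q ^ 2
  card_tangents : T.card = q
  eq_singleton : ∀ y ∈ T, S y = {0}
  card_eq : ∀ y ∉ T, (S y).card = q + 1
  moments : ∀ k, 1 ≤ k → k ≤ q ^ 2 - 2 →
    ∃ P : F[X], P.natDegree ≤ k - 1 ∧ ∀ y, P.eval y = ∑ x ∈ S y, x ^ k
  ncard_zero_mem_le : {y | 0 ∈ S y}.ncard ≤ q + 1
  ncard_line : ∀ l ≠ 0, ∀ y₀ ∈ T, {y | l * (y - y₀) ∈ S y}.ncard = q + 1

/-- The polynomial `∑ m ≤ q, d m * f ^ (q + 1 - m) - c * ∏ t ∈ T, (X - t)`. If `d m` and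
`-c * ∏ t ∈ T, (X - t)` interpolate the coefficients of the nodal polynomials of a tangent family,
its zeros off `T` are the parameters `y` with `f y ∈ S y`. -/
noncomputable def nodalSubst {F : Type*} [Field F] (q : ℕ) (T : Finset F) (c : F) (d : ℕ → F[X])
    (f : F[X]) : F[X] :=
  ∑ m ∈ Finset.range (q + 1), d m * f ^ (q + 1 - m) - C c * nodal T id

section NodalSubst

variable {F : Type*} [Field F] {q : ℕ} {T : Finset F} {c : F} {d : ℕ → F[X]} {f : F[X]}

theorem natDegree_nodalSubst_le (hT : T.card ≤ q + 1) (hd : ∀ m ≤ q, (d m).natDegree ≤ m)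
    (hf : f.natDegree ≤ 1) : (nodalSubst q T c d f).natDegree ≤ q + 1 := by
  refine (natDegree_sub_le _ _).trans (max_le ?_ ?_)
  · refine natDegree_sum_le_of_forall_le _ _ fun m hm ↦ natDegree_mul_le.trans ?_
    rw [Finset.mem_range] at hm
    have hpow : (f ^ (q + 1 - m)).natDegree ≤ (q + 1 - m) * 1 := natDegree_pow_le_of_le _ hf
    have hdm := hd m (by omega)
    omega
  · exact (natDegree_C_mul_le _ _).trans (natDegree_nodal.le.trans hT)

theorem eval_nodalSubst (y : F) : (nodalSubst q T c d f).eval y =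
    ∑ m ∈ Finset.range (q + 1), (d m).eval y * f.eval y ^ (q + 1 - m) -
      c * (nodal T id).eval y := by
  simp [nodalSubst, eval_finsetSum]

theorem eval_nodalSubst_eq_zero {y : F} (hy : y ∈ T) (hf : f.eval y = 0) :
    (nodalSubst q T c d f).eval y = 0 := by
  rw [eval_nodalSubst, eval_nodal_id_eq_zero_iff.2 hy, mul_zero, sub_zero, hf]
  refine Finset.sum_eq_zero fun m hm ↦ ?_
  rw [Finset.mem_range] at hm
  rw [zero_pow (by omega), mul_zero]

theorem eval_derivative_nodalSubst {y : F} (hf : f.eval y = 0) :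
    (derivative (nodalSubst q T c d f)).eval y =
      (d q).eval y * (derivative f).eval y - c * (derivative (nodal T id)).eval y := by
  have hvanish (m : ℕ) (hm : m ∈ Finset.range q) :
      (derivative (d m * f ^ (q + 1 - m))).eval y = 0 := by
    obtain ⟨k, hk⟩ : ∃ k, q + 1 - m = k + 2 := ⟨q - m - 1, by rw [Finset.mem_range] at hm; omega⟩
    simp [derivative_mul, derivative_pow, hk, hf]
  rw [nodalSubst, derivative_sub, derivative_sum, eval_sub, eval_finsetSum, Finset.sum_range_succ,
    Finset.sum_eq_zero hvanish]
  simp [derivative_mul, hf]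

end NodalSubst

namespace IsTangentFamily

variable {F : Type*} [Field F] [Fintype F] {q : ℕ} {T : Finset F} {S : F → Finset F}

theorem three_mul_le_sq (h : IsTangentFamily q T S) : 3 * q ≤ q ^ 2 := by
  nlinarith [h.three_le]

theorem powerSum_eq_zero (h : IsTangentFamily q T S) {k : ℕ} (hk : 1 ≤ k) (hkq : k ≤ q) (y : F) :
    ∑ x ∈ S y, x ^ k = 0 := by
  have hq := h.three_mul_le_sq
  obtain ⟨P, hdeg, hP⟩ := h.moments k hk (by omega)
  have hzero : P = 0 := by
    refine eq_zero_of_natDegree_lt_card_of_eval_eq_zero' P T (fun y hy ↦ ?_) ?_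
    · rw [hP, h.eq_singleton y hy, Finset.sum_singleton, zero_pow (by omega)]
    · rw [h.card_tangents]
      omega
  rw [← hP, hzero, eval_zero]

theorem exists_powerSum_eq_nodal_mul (h : IsTangentFamily q T S) :
    ∃ R : ℕ → F[X], ∀ k ≤ q, (R k).natDegree ≤ k ∧
      ∀ y, ∑ x ∈ S y, x ^ (q + 1 + k) = (nodal T id).eval y * (R k).eval y := by
  have hq := h.three_le
  have hq2 := h.three_mul_le_sq
  have hex : ∀ k ≤ q, ∃ R : F[X], R.natDegree ≤ k ∧
      ∀ y, ∑ x ∈ S y, x ^ (q + 1 + k) = (nodal T id).eval y * R.eval y := by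
    intro k hk
    obtain ⟨P, hdeg, hP⟩ := h.moments (q + 1 + k) (by omega) (by omega)
    have hroots : ∀ y ∈ T, P.eval y = 0 := fun y hy ↦ by
      rw [hP, h.eq_singleton y hy, Finset.sum_singleton, zero_pow (by omega)]
    obtain ⟨R, hR, rfl⟩ := exists_eq_nodal_mul (k := k) hroots (by rw [h.card_tangents]; omega)
    exact ⟨R, hR, fun y ↦ by rw [← hP, eval_mul]⟩
  choose! R hR using hex
  exact ⟨R, hR⟩

theorem coeff_nodal_card (h : IsTangentFamily q T S) {y : F} (hy : y ∉ T) :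
    (nodal (S y) id).coeff (q + 1) = 1 := by
  have hmonic := nodal_monic (s := S y) (v := id)
  rwa [Monic, leadingCoeff, natDegree_nodal, h.card_eq y hy] at hmonic

theorem cast_card_eq_one (h : IsTangentFamily q T S) {y : F} (hy : y ∉ T) :
    ((S y).card : F) = 1 := by
  have hcast := FiniteField.cast_card_eq_zero F
  rw [h.card_field, Nat.cast_pow, sq_eq_zero_iff] at hcast
  rw [h.card_eq y hy, Nat.cast_add, hcast, zero_add, Nat.cast_one]

theorem coeff_zero_nodal (h : IsTangentFamily q T S) {R : F[X]} {y : F} (hy : y ∉ T)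
    (hR : ∑ x ∈ S y, x ^ (q + 1) = (nodal T id).eval y * R.eval y) :
    (nodal (S y) id).coeff 0 = -((nodal T id).eval y * R.eval y) := by
  have hnewton := sum_coeff_nodal_mul_powerSum (S y) 0
  simp only [h.card_eq y hy, add_zero] at hnewton
  rw [Finset.sum_range_succ, Finset.sum_range_succ', Finset.sum_eq_zero, Nat.sub_zero, Nat.sub_self,
    h.coeff_nodal_card hy, hR] at hnewton
  · simp only [pow_zero, Finset.sum_const, nsmul_eq_mul, mul_one, h.cast_card_eq_one hy] at hnewton
    linear_combination hnewton
  · intro m hm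
    rw [Finset.mem_range] at hm
    rw [h.powerSum_eq_zero (by omega) (by omega), mul_zero]

theorem coeff_nodal_convolution (h : IsTangentFamily q T S) {R : ℕ → F[X]}
    (hR : ∀ k ≤ q, ∀ y, ∑ x ∈ S y, x ^ (q + 1 + k) = (nodal T id).eval y * (R k).eval y)
    {y : F} (hy : y ∉ T) {j : ℕ} (hj : 1 ≤ j) (hjq : j ≤ q) :
    ∑ m ∈ Finset.range (j + 1), (nodal (S y) id).coeff (q + 1 - m) * (R (j - m)).eval y = 0 := by
  have hnewton := sum_coeff_nodal_mul_powerSum (S y) j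
  rw [h.card_eq y hy, ← Finset.sum_subset (Finset.range_subset_range.2
    (show j + 1 ≤ q + 1 + 1 by omega))] at hnewton
  · refine (mul_eq_zero.1 ?_).resolve_left (mt eval_nodal_id_eq_zero_iff.1 hy)
    rw [← hnewton, Finset.mul_sum]
    refine Finset.sum_congr rfl fun m hm ↦ ?_
    rw [Finset.mem_range] at hm
    rw [show q + 1 - m + j = q + 1 + (j - m) by omega, hR _ (by omega)]
    ring
  · intro m hm hmj
    rw [Finset.mem_range] at hm hmj
    rw [h.powerSum_eq_zero (by omega) (by omega), mul_zero]

theorem exists_coeff_interpolation (h : IsTangentFamily q T S) :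
    ∃ c : F, c ≠ 0 ∧ ∃ d : ℕ → F[X], (∀ j ≤ q, (d j).natDegree ≤ j) ∧ ∀ y ∉ T,
      (nodal (S y) id).coeff 0 = -(c * (nodal T id).eval y) ∧
      ∀ j ≤ q, (nodal (S y) id).coeff (q + 1 - j) = (d j).eval y := by
  obtain ⟨R, hR⟩ := h.exists_powerSum_eq_nodal_mul
  have hR0 : R 0 = C ((R 0).coeff 0) := eq_C_of_natDegree_le_zero (hR 0 (Nat.zero_le q)).1
  set c := (R 0).coeff 0
  have hcoeff (y : F) (hy : y ∉ T) :
      (nodal (S y) id).coeff 0 = -(c * (nodal T id).eval y) := by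
    rw [h.coeff_zero_nodal hy ((hR 0 (Nat.zero_le q)).2 y), hR0, eval_C, mul_comm]
  have hc : c ≠ 0 := by
    intro hc
    have hall : {y | 0 ∈ S y} = Set.univ := by
      refine Set.eq_univ_of_forall fun y ↦ ?_
      by_cases hy : y ∈ T
      · rw [Set.mem_ofPred_eq, h.eq_singleton y hy, Finset.mem_singleton]
      · refine eval_nodal_id_eq_zero_iff.1 ?_
        rw [← coeff_zero_eq_eval_zero, hcoeff y hy, hc, zero_mul, neg_zero]
    have hle := h.ncard_zero_mem_le
    rw [hall, Set.ncard_univ, Nat.card_eq_fintype_card, h.card_field] at hle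
    nlinarith [h.three_le]
  have hex := exists_polynomial_of_convolution (Y := {y | y ∉ T})
    (a := fun y j ↦ (nodal (S y) id).coeff (q + 1 - j)) hc hR0 (fun k hk ↦ (hR k hk).1)
    (fun y hy ↦ h.coeff_nodal_card hy)
    (fun y hy j hj hjq ↦ h.coeff_nodal_convolution (fun k hk ↦ (hR k hk).2) hy hj hjq)
  choose! d hdeg hd using hex
  exact ⟨c, hc, d, hdeg, fun y hy ↦ ⟨hcoeff y hy, fun j hj ↦ hd j hj y hy⟩⟩

variable {c : F} {d : ℕ → F[X]}

theorem eval_nodalSubst_eq_zero_iff (h : IsTangentFamily q T S)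
    (hcoeff : ∀ y ∉ T, (nodal (S y) id).coeff 0 = -(c * (nodal T id).eval y) ∧
      ∀ j ≤ q, (nodal (S y) id).coeff (q + 1 - j) = (d j).eval y) {f : F[X]} {y : F} (hy : y ∉ T) :
    (nodalSubst q T c d f).eval y = 0 ↔ f.eval y ∈ S y := by
  have heval : (nodal (S y) id).eval (f.eval y) = (nodalSubst q T c d f).eval y := by
    rw [eval_nodalSubst, eval_eq_sum_range, natDegree_nodal, h.card_eq y hy,
      Finset.sum_range_succ', (hcoeff y hy).1, pow_zero, mul_one, ← sub_eq_add_neg,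
      ← Finset.sum_range_reflect]
    refine congrArg (· - _) (Finset.sum_congr rfl fun m hm ↦ ?_)
    rw [Finset.mem_range] at hm
    rw [← (hcoeff y hy).2 m (by omega), show q + 1 - 1 - m + 1 = q + 1 - m by omega]
  rw [← heval, eval_nodal_id_eq_zero_iff]

/-- Otherwise the line of slope `c * N' / d q` through the tangent point at `y₀` would make
`nodalSubst` vanish doubly at `y₀`, giving it more zeros than its degree allows. -/
theorem eval_lastCoeff_eq_zero (h : IsTangentFamily q T S) (hc : c ≠ 0)
    (hd : ∀ j ≤ q, (d j).natDegree ≤ j)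
    (hcoeff : ∀ y ∉ T, (nodal (S y) id).coeff 0 = -(c * (nodal T id).eval y) ∧
      ∀ j ≤ q, (nodal (S y) id).coeff (q + 1 - j) = (d j).eval y) {y₀ : F} (hy₀ : y₀ ∈ T) :
    (d q).eval y₀ = 0 := by
  classical
  by_contra hne
  obtain ⟨l, hl⟩ : ∃ l, l = c * (derivative (nodal T id)).eval y₀ / (d q).eval y₀ := ⟨_, rfl⟩
  have hl0 : l ≠ 0 := hl ▸ div_ne_zero (mul_ne_zero hc (eval_derivative_nodal_ne_zero hy₀)) hne
  set f : F[X] := C l * (X - C y₀)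
  have hf (y : F) : f.eval y = l * (y - y₀) := by simp [f]
  have hf₀ : f.eval y₀ = 0 := by rw [hf, sub_self, mul_zero]
  let Z := (Set.toFinite {y | l * (y - y₀) ∈ S y}).toFinset
  have hmem (y : F) : y ∈ Z ↔ f.eval y ∈ S y := by
    rw [Set.Finite.mem_toFinset, hf]
    rfl
  have hZ : Z.card = q + 1 := by
    rw [← Set.ncard_eq_toFinset_card, h.ncard_line l hl0 y₀ hy₀]
  have hzero : nodalSubst q T c d f = 0 := by
    refine eq_zero_of_forall_eval_eq_zero_of_eval_derivative_eq_zero (Z := Z) (y₀ := y₀) ?_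
      (fun y hy ↦ ?_) ?_ ?_
    · rw [hmem, hf₀, h.eq_singleton y₀ hy₀, Finset.mem_singleton]
    · by_cases hyT : y ∈ T
      · refine eval_nodalSubst_eq_zero hyT ?_
        rwa [hmem, h.eq_singleton y hyT, Finset.mem_singleton] at hy
      · exact (h.eval_nodalSubst_eq_zero_iff hcoeff hyT).2 ((hmem y).1 hy)
    · rw [eval_derivative_nodalSubst hf₀]
      have hf' : (derivative f).eval y₀ = l := by simp [f]
      rw [hf', hl, mul_div_cancel₀ _ hne, sub_self]
    · rw [hZ]
      exact natDegree_nodalSubst_le (by rw [h.card_tangents]; omega) hd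
        ((natDegree_C_mul_le _ _).trans (natDegree_X_sub_C_le _))
  have hcard : Fintype.card F ≤ (T ∪ Z).card := by
    rw [← Finset.card_univ]
    refine Finset.card_le_card fun y _ ↦ Finset.mem_union.2 (or_iff_not_imp_left.2 fun hy ↦ ?_)
    rw [hmem, ← h.eval_nodalSubst_eq_zero_iff hcoeff hy, hzero, eval_zero]
  have hunion := Finset.card_union_le T Z
  have hq := h.three_mul_le_sq
  have := h.three_le
  rw [h.card_field] at hcard
  rw [hZ, h.card_tangents] at hunion
  omega

theorem exists_sum_inv_eq (h : IsTangentFamily q T S) :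
    ∃ e : F, ∀ y ∉ T, 0 ∉ S y ∧ ∑ x ∈ S y, x⁻¹ = e := by
  obtain ⟨c, hc, d, hd, hcoeff⟩ := h.exists_coeff_interpolation
  obtain ⟨E, hE, hdq⟩ := exists_eq_nodal_mul (k := 0)
    (fun y hy ↦ h.eval_lastCoeff_eq_zero hc hd hcoeff hy)
    (by simpa [h.card_tangents] using hd q le_rfl)
  rw [eq_C_of_natDegree_le_zero hE] at hdq
  refine ⟨E.coeff 0 / c, fun y hy ↦ ?_⟩
  obtain ⟨hcoeff0, hcoeff'⟩ := hcoeff y hy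
  have hT : (nodal T id).eval y ≠ 0 := mt eval_nodal_id_eq_zero_iff.1 hy
  have h0 : 0 ∉ S y := by
    rw [← eval_nodal_id_eq_zero_iff, ← coeff_zero_eq_eval_zero, hcoeff0]
    exact neg_ne_zero.2 (mul_ne_zero hc hT)
  refine ⟨h0, ?_⟩
  have h1 : (nodal (S y) id).coeff 1 = (nodal T id).eval y * E.coeff 0 := by
    have := hcoeff' q le_rfl
    rwa [Nat.add_sub_cancel_left, hdq, eval_mul, eval_C] at this
  rw [coeff_one_nodal h0, hcoeff0, neg_neg] at h1
  rw [eq_div_iff hc]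
  refine mul_left_cancel₀ hT ?_
  linear_combination h1

end IsTangentFamily

end TangentFamilies

section LinearAlgebra

variable {F E : Type*} [Field F] [AddCommGroup E] [Module F E]

theorem linearIndependent_pair_iff_notMem_span {u w : E} :
    LinearIndependent F ![u, w] ↔ u ≠ 0 ∧ w ∉ Submodule.span F {u} := by
  by_cases hu : u = 0
  · exact iff_of_false (fun h ↦ h.ne_zero 0 hu) fun h ↦ h.1 hu
  · simp [LinearIndependent.pair_iff' hu, hu, Submodule.mem_span_singleton]

theorem linearIndependent_triple_iff_notMem_span {u v w : E} :
    LinearIndependent F ![u, v, w] ↔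
      LinearIndependent F ![u, v] ∧ w ∉ Submodule.span F {u, v} := by
  have hsnoc : ![u, v, w] = Fin.snoc ![u, v] w := by
    ext i
    fin_cases i <;> rfl
  rw [hsnoc, linearIndependent_finSnoc, Matrix.range_cons_cons_empty]

theorem linearIndependent_triple_iff {u v w : E} :
    LinearIndependent F ![u, v, w] ↔
      ∀ a b c : F, a • u + b • v + c • w = 0 → a = 0 ∧ b = 0 ∧ c = 0 := by
  rw [Fintype.linearIndependent_iff]
  refine ⟨fun h a b c habc ↦ ?_, fun h g hg ↦ ?_⟩
  · have h' := h ![a, b, c] (by simpa [Fin.sum_univ_three] using habc)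
    exact ⟨h' 0, h' 1, h' 2⟩
  · have h' := h (g 0) (g 1) (g 2) (by simpa [Fin.sum_univ_three] using hg)
    simpa [Fin.forall_fin_succ] using h'

theorem linearIndependent_pair_coe {W : Submodule F E} {u w : W}
    (h : LinearIndependent F ![u, w]) : LinearIndependent F ![(u : E), (w : E)] := by
  rw [LinearIndependent.pair_iff] at h ⊢
  exact fun a b hab ↦ h a b (Subtype.ext hab)

theorem linearIndependent_triple_coe {W : Submodule F E} {u v w : W}
    (h : LinearIndependent F ![u, v, w]) : LinearIndependent F ![(u : E), (v : E), (w : E)] := by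
  rw [linearIndependent_triple_iff] at h ⊢
  exact fun a b c habc ↦ h a b c (Subtype.ext habc)

end LinearAlgebra

section Cones

/-- A union of punctured lines through the origin, the set of nonzero representatives of a set of
points of the projective space of `E`. -/
structure IsCone (F : Type*) {E : Type*} [Field F] [AddCommGroup E] [Module F E] (B : Set E) :
    Prop where
  zero_notMem : 0 ∉ B
  smul_mem : ∀ c : F, c ≠ 0 → ∀ v ∈ B, c • v ∈ B

/-- The parameters of the affine points `x • u + w` of the line `⟨u, w⟩` that lie in `B`. -/
noncomputable def affineTrace (F : Type*) {E : Type*} [Field F] [Finite F] [AddCommGroup E]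
    [Module F E] (B : Set E) (u w : E) : Finset F :=
  (Set.toFinite {x : F | x • u + w ∈ B}).toFinset

/-- The number of projective points of a cone `B` on the line spanned by `u` and `w`. -/
noncomputable def lineCard (F : Type*) {E : Type*} [Field F] [Finite F] [AddCommGroup E]
    [Module F E] (B : Set E) (u w : E) : ℕ :=
  B.indicator 1 u + (affineTrace F B u w).card

variable {F E : Type*} [Field F] [AddCommGroup E] [Module F E] {B : Set E}

theorem IsCone.smul_mem_iff (hB : IsCone F B) {c : F} (hc : c ≠ 0) {v : E} : c • v ∈ B ↔ v ∈ B := by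
  refine ⟨fun h ↦ ?_, hB.smul_mem c hc v⟩
  simpa [smul_smul, hc] using hB.smul_mem c⁻¹ (inv_ne_zero hc) _ h

theorem mem_affineTrace [Finite F] {u w : E} {x : F} :
    x ∈ affineTrace F B u w ↔ x • u + w ∈ B := by
  rw [affineTrace, Set.Finite.mem_toFinset, Set.mem_ofPred_eq]

theorem IsCone.ncard_inter_sup_span [Finite F] [Finite E] (hB : IsCone F B) {W : Submodule F E}
    {w : E} (hw : w ∉ W) : (B ∩ ↑(W ⊔ Submodule.span F {w})).ncard =
      (B ∩ W).ncard + (Nat.card F - 1) * {x ∈ W | x + w ∈ B}.ncard := by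
  set X := {x ∈ W | x + w ∈ B}
  let f : Fˣ × E → E := fun z ↦ z.1 • (z.2 + w)
  have hout {c : F} {x : E} (hx : x ∈ W) (hc : x + c • w ∈ W) : c = 0 := by
    by_contra hc0
    exact hw ((W.smul_mem_iff hc0).1 ((W.add_mem_iff_right hx).1 hc))
  have hsplit : B ∩ ↑(W ⊔ Submodule.span F {w}) = B ∩ W ∪ f '' Set.univ ×ˢ X := by
    ext v
    constructor
    · rintro ⟨hv, hvW⟩
      obtain ⟨x, hx, y, hy, rfl⟩ := Submodule.mem_sup.1 hvW
      obtain ⟨c, rfl⟩ := Submodule.mem_span_singleton.1 hy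
      by_cases hc : c = 0
      · exact Or.inl ⟨hv, by simpa [hc] using hx⟩
      · refine Or.inr ⟨(Units.mk0 c hc, c⁻¹ • x), ⟨trivial, W.smul_mem _ hx, ?_⟩, ?_⟩
        · rw [← hB.smul_mem_iff hc]
          simpa [smul_smul, hc] using hv
        · simp [f, smul_smul, hc, Units.smul_def]
    · rintro (⟨hv, hvW⟩ | ⟨⟨c, x⟩, ⟨-, hx, hxB⟩, rfl⟩)
      · exact ⟨hv, Submodule.mem_sup_left hvW⟩
      · refine ⟨(hB.smul_mem_iff c.ne_zero).2 hxB, Submodule.smul_mem _ _ ?_⟩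
        exact Submodule.add_mem_sup hx (Submodule.mem_span_singleton_self w)
  have hinj : Set.InjOn f (Set.univ ×ˢ X) := by
    rintro ⟨c, x⟩ ⟨-, hx, -⟩ ⟨c', x'⟩ ⟨-, hx', -⟩ h
    have hdiff : c.val • x - c'.val • x' + (c.val - c'.val) • w = 0 := by
      have h' : c.val • (x + w) = c'.val • (x' + w) := h
      rw [← sub_eq_zero] at h'
      rw [← h']
      module
    have hc : c = c' := Units.ext (sub_eq_zero.1 (hout
      (W.sub_mem (W.smul_mem _ hx) (W.smul_mem _ hx')) (hdiff ▸ W.zero_mem)))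
    subst hc
    simpa [f] using h
  have hdisj : Disjoint (B ∩ W) (f '' Set.univ ×ˢ X) := by
    rw [Set.disjoint_right]
    rintro _ ⟨⟨c, x⟩, ⟨-, hx, -⟩, rfl⟩ ⟨-, hv⟩
    refine c.ne_zero (hout (W.smul_mem c.val hx) ?_)
    rw [← smul_add]
    exact hv
  rw [hsplit, Set.ncard_union_eq hdisj, hinj.ncard_image, Set.ncard_prod,
    Set.ncard_univ, Nat.card_units]

theorem IsCone.ncard_inter_span_singleton [Finite F] [Finite E] (hB : IsCone F B) {u : E}
    (hu : u ≠ 0) : (B ∩ ↑(Submodule.span F {u})).ncard = (Nat.card F - 1) * B.indicator 1 u := by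
  have hsup := hB.ncard_inter_sup_span (W := ⊥) (w := u) (by simpa using hu)
  have hbot : B ∩ ↑(⊥ : Submodule F E) = ∅ := by
    simp [hB.zero_notMem]
  have htrace : {x ∈ (⊥ : Submodule F E) | x + u ∈ B}.ncard = B.indicator 1 u := by
    by_cases huB : u ∈ B
    · have : {x ∈ (⊥ : Submodule F E) | x + u ∈ B} = {0} := by
        ext x
        simp +contextual [huB]
      rw [this, Set.ncard_singleton, Set.indicator_of_mem huB, Pi.one_apply]
    · have : {x ∈ (⊥ : Submodule F E) | x + u ∈ B} = ∅ := by
        ext x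
        simp +contextual [huB]
      rw [this, Set.ncard_empty, Set.indicator_of_notMem huB]
  rwa [bot_sup_eq, hbot, Set.ncard_empty, zero_add, htrace] at hsup

theorem IsCone.ncard_inter_span_pair [Finite F] [Finite E] (hB : IsCone F B) {u w : E}
    (h : LinearIndependent F ![u, w]) :
    (B ∩ ↑(Submodule.span F {u, w})).ncard = (Nat.card F - 1) * lineCard F B u w := by
  obtain ⟨hu, hw⟩ := linearIndependent_pair_iff_notMem_span.1 h
  have htrace : {x ∈ Submodule.span F {u} | x + w ∈ B} =
      (fun x : F ↦ x • u) '' affineTrace F B u w := by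
    ext x
    simp only [Submodule.mem_span_singleton, Set.mem_ofPred_eq, Set.mem_image, Finset.mem_coe,
      mem_affineTrace]
    constructor
    · rintro ⟨⟨c, rfl⟩, hc⟩
      exact ⟨c, hc, rfl⟩
    · rintro ⟨c, hc, rfl⟩
      exact ⟨⟨c, rfl⟩, hc⟩
  rw [Set.insert_eq, Submodule.span_union, hB.ncard_inter_sup_span hw,
    hB.ncard_inter_span_singleton hu, htrace,
    Set.ncard_image_of_injective _ (smul_left_injective F hu), Set.ncard_coe_finset, lineCard,
    mul_add]

theorem IsCone.ncard_inter_span_triple [Fintype F] [Finite E] (hB : IsCone F B) {u v w : E}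
    (h : LinearIndependent F ![u, v, w]) :
    (B ∩ ↑(Submodule.span F {u, v, w})).ncard =
      (Nat.card F - 1) * (lineCard F B u v + ∑ y : F, (affineTrace F B u (y • v + w)).card) := by
  obtain ⟨huv, hw⟩ := linearIndependent_triple_iff_notMem_span.1 h
  let T := Finset.univ.sigma fun y : F ↦ affineTrace F B u (y • v + w)
  let f : (_ : F) × F → E := fun z ↦ z.2 • u + z.1 • v
  have hinj : Function.Injective f := by
    rintro ⟨y, x⟩ ⟨y', x'⟩ hxy
    have hzero : (x - x') • u + (y - y') • v = 0 := by
      have hxy' : x • u + y • v = x' • u + y' • v := hxy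
      rw [← sub_eq_zero] at hxy'
      rw [← hxy']
      module
    obtain ⟨hx, hy⟩ := LinearIndependent.pair_iff.1 huv _ _ hzero
    rw [sub_eq_zero.1 hx, sub_eq_zero.1 hy]
  have htrace : {x ∈ Submodule.span F {u, v} | x + w ∈ B} = f '' T := by
    ext x
    simp only [Submodule.mem_span_pair, Set.mem_ofPred_eq, Set.mem_image, Finset.mem_coe, T,
      Finset.mem_sigma, Finset.mem_univ, true_and, mem_affineTrace, Sigma.exists]
    constructor
    · rintro ⟨⟨a, b, rfl⟩, hab⟩
      exact ⟨b, a, by rwa [← add_assoc], rfl⟩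
    · rintro ⟨b, a, hab, rfl⟩
      exact ⟨⟨a, b, rfl⟩, by rwa [← add_assoc] at hab⟩
  have hunion : ({u, v, w} : Set E) = {u, v} ∪ {w} := by
    ext x
    simp only [Set.mem_insert_iff, Set.mem_union, Set.mem_singleton_iff, or_assoc]
  rw [hunion, Submodule.span_union, hB.ncard_inter_sup_span hw, hB.ncard_inter_span_pair huv,
    htrace, Set.ncard_image_of_injective _ hinj, Set.ncard_coe_finset, Finset.card_sigma, mul_add]

theorem IsCone.lineCard_eq_of_span_eq [Finite F] [Finite E] (hB : IsCone F B) {u w u' w' : E}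
    (h : LinearIndependent F ![u, w]) (h' : LinearIndependent F ![u', w'])
    (hspan : Submodule.span F {u, w} = Submodule.span F {u', w'}) :
    lineCard F B u w = lineCard F B u' w' := by
  have hcard : 0 < Nat.card F - 1 := Nat.sub_pos_of_lt Finite.one_lt_card
  refine Nat.eq_of_mul_eq_mul_left hcard ?_
  rw [← hB.ncard_inter_span_pair h, ← hB.ncard_inter_span_pair h', hspan]

end Cones

section LinePencils

variable {F E : Type*} [Field F] [AddCommGroup E] [Module F E] {B : Set E} {u v w : E}

theorem linearIndependent_pair_shift_iff (x : F) :
    LinearIndependent F ![x • u + w, u] ↔ LinearIndependent F ![u, w] := by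
  rw [LinearIndependent.pair_symm_iff, LinearIndependent.pair_add_smul_right_iff]

theorem ne_zero_of_linearIndependent_pair_smul_add_smul {a b : F}
    (h : LinearIndependent F ![u, a • u + b • w]) : b ≠ 0 := by
  rintro rfl
  have := LinearIndependent.pair_iff.1 h a (-1) (by module)
  simp at this

theorem linearIndependent_triple_shift (h : LinearIndependent F ![u, v, w]) (y : F) :
    LinearIndependent F ![u, y • v + w, v] := by
  rw [linearIndependent_triple_iff] at h ⊢
  intro a b c habc
  obtain ⟨ha, hbc, hb⟩ := h a (b * y + c) b (by rw [← habc]; module)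
  refine ⟨ha, hb, ?_⟩
  rwa [hb, zero_mul, zero_add] at hbc

theorem linearIndependent_triple_swap (h : LinearIndependent F ![u, v, w]) :
    LinearIndependent F ![u, w, v] := by
  simpa only [zero_smul, zero_add] using linearIndependent_triple_shift h 0

theorem linearIndependent_pair_of_triple (h : LinearIndependent F ![u, v, w]) :
    LinearIndependent F ![u, v] :=
  (linearIndependent_triple_iff_notMem_span.1 h).1

theorem linearIndependent_pair_smul_add (h : LinearIndependent F ![u, v, w]) (y : F) :
    LinearIndependent F ![u, y • v + w] :=
  linearIndependent_pair_of_triple (linearIndependent_triple_shift h y)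

theorem exists_linearIndependent_pair (hE : 1 < finrank F E) :
    ∃ u w : E, LinearIndependent F ![u, w] := by
  have := Module.nontrivial_of_finrank_pos (R := F) (M := E) (by omega)
  obtain ⟨u, hu⟩ := exists_ne (0 : E)
  exact ⟨u, exists_linearIndependent_pair_of_one_lt_finrank hE hu⟩

theorem exists_linearIndependent_triple (h : LinearIndependent F ![u, w])
    (hE : 2 < finrank F E) : ∃ v, LinearIndependent F ![u, w, v] := by
  by_contra! hspan
  have htop : Submodule.span F (Set.range ![u, w]) = ⊤ := by
    rw [Matrix.range_cons_cons_empty, eq_top_iff]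
    intro v _
    by_contra hv
    exact hspan v (linearIndependent_triple_iff_notMem_span.2 ⟨h, hv⟩)
  have hle := finrank_range_le_card (R := F) ![u, w]
  rw [Set.finrank, htop, finrank_top, Fintype.card_fin] at hle
  omega

theorem IsCone.lineCard_shift [Finite F] [Finite E] (hB : IsCone F B)
    (h : LinearIndependent F ![u, w]) (x : F) :
    lineCard F B (x • u + w) u = lineCard F B u w := by
  refine hB.lineCard_eq_of_span_eq ((linearIndependent_pair_shift_iff x).2 h) h ?_
  ext v
  simp only [Submodule.mem_span_pair]
  constructor
  · rintro ⟨a, b, rfl⟩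
    exact ⟨a * x + b, a, by module⟩
  · rintro ⟨a, b, rfl⟩
    exact ⟨b, a - b * x, by module⟩

theorem lineCard_of_mem [Finite F] (hu : u ∈ B) :
    lineCard F B u w = 1 + (affineTrace F B u w).card := by
  rw [lineCard, Set.indicator_of_mem hu, Pi.one_apply]

theorem lineCard_of_notMem [Finite F] (hu : u ∉ B) :
    lineCard F B u w = (affineTrace F B u w).card := by
  rw [lineCard, Set.indicator_of_notMem hu, zero_add]

theorem lineCard_eq_ite_add_sum_ite [Fintype F] [DecidablePred (· ∈ B)] :
    lineCard F B u w = (if u ∈ B then 1 else 0) + ∑ x : F, if x • u + w ∈ B then 1 else 0 := by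
  rw [lineCard, affineTrace, Set.Finite.toFinset_ofPred, Finset.card_filter, Set.indicator_apply,
    Pi.one_apply]

/-- The number of projective points of a cone `B`. -/
noncomputable def pointCard (F : Type*) {E : Type*} (B : Set E) : ℕ :=
  B.ncard / (Nat.card F - 1)

theorem IsCone.ncard_eq_mul_lineCard_add_sum [Fintype F] [Finite E] (hB : IsCone F B)
    (hE : finrank F E = 3) (h : LinearIndependent F ![u, v, w]) :
    B.ncard = (Nat.card F - 1) *
      (lineCard F B u v + ∑ y : F, (affineTrace F B u (y • v + w)).card) := by
  have hspan : Submodule.span F {u, v, w} = ⊤ := by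
    have := h.span_eq_top_of_card_eq_finrank' (by rw [hE, Fintype.card_fin])
    rwa [Matrix.range_cons, Matrix.range_cons_cons_empty, Set.singleton_union] at this
  rw [← hB.ncard_inter_span_triple h, hspan, Submodule.top_coe, Set.inter_univ]

theorem IsCone.pointCard_eq_lineCard_add_sum [Fintype F] [Finite E] (hB : IsCone F B)
    (hE : finrank F E = 3) (h : LinearIndependent F ![u, v, w]) :
    pointCard F B = lineCard F B u v + ∑ y : F, (affineTrace F B u (y • v + w)).card := by
  rw [pointCard, hB.ncard_eq_mul_lineCard_add_sum hE h,
    Nat.mul_div_cancel_left _ (Nat.sub_pos_of_lt Finite.one_lt_card)]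

end LinePencils

section DoubleCounting

/-- The vectors that span a line together with `u`. -/
noncomputable def lineMates (F : Type*) {E : Type*} [Field F] [AddCommGroup E] [Module F E]
    [Finite E] (u : E) : Finset E :=
  (Set.toFinite {w | LinearIndependent F ![u, w]}).toFinset

variable {F E : Type*} [Field F] [AddCommGroup E] [Module F E] [Finite E] {B : Set E} {u w : E}

theorem mem_lineMates : w ∈ lineMates F u ↔ LinearIndependent F ![u, w] := by
  rw [lineMates, Set.Finite.mem_toFinset, Set.mem_ofPred_eq]

theorem smul_add_mem_lineMates_iff (x : F) : x • u + w ∈ lineMates F u ↔ w ∈ lineMates F u := by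
  rw [mem_lineMates, mem_lineMates, LinearIndependent.pair_add_smul_right_iff]

theorem coe_lineMates (hu : u ≠ 0) :
    (lineMates F u : Set E) = (Submodule.span F {u} : Set E)ᶜ := by
  ext w
  rw [Finset.mem_coe, mem_lineMates, linearIndependent_pair_iff_notMem_span]
  exact and_iff_right hu

theorem card_lineMates_add (hu : u ≠ 0) :
    (lineMates F u).card + Nat.card F = Nat.card F ^ finrank F E := by
  have hspan : (Submodule.span F {u} : Set E).ncard = Nat.card F := by
    rw [← Nat.card_coe_set_eq]
    exact Nat.card_congr (LinearEquiv.toSpanNonzeroSingleton F E u hu).toEquiv.symm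
  rw [← Set.ncard_coe_finset, coe_lineMates hu, ← hspan, add_comm, Set.ncard_add_ncard_compl,
    hspan, Module.natCard_eq_pow_finrank (K := F)]

open Classical in
theorem IsCone.sum_card_affineTrace_lineMates [Finite F] (hB : IsCone F B) (hu : u ≠ 0) :
    ∑ w ∈ lineMates F u, (affineTrace F B u w).card +
      Nat.card F * ((Nat.card F - 1) * B.indicator 1 u) = Nat.card F * B.ncard := by
  have := Fintype.ofFinite F
  have hoff : {w ∈ lineMates F u | w ∈ B}.card = (B \ Submodule.span F {u}).ncard := by
    rw [← Set.ncard_coe_finset, Finset.coe_filter, Set.sdiff_eq, ← coe_lineMates hu, Set.inter_comm]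
    rfl
  have hshift (x : F) :
      {w ∈ lineMates F u | x • u + w ∈ B}.card = {w ∈ lineMates F u | w ∈ B}.card :=
    Finset.card_equiv (Equiv.addLeft (x • u)) fun w ↦ by
      simp only [Finset.mem_filter, Equiv.coe_addLeft, smul_add_mem_lineMates_iff]
  have hcount : ∑ w ∈ lineMates F u, (affineTrace F B u w).card =
      ∑ x : F, {w ∈ lineMates F u | x • u + w ∈ B}.card := by
    simp only [affineTrace, Set.Finite.toFinset_ofPred]
    exact Finset.sum_card_bipartiteAbove_eq_sum_card_bipartiteBelow fun w x ↦ x • u + w ∈ B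
  rw [hcount, Finset.sum_congr rfl fun x _ ↦ hshift x, Finset.sum_const, Finset.card_univ,
    smul_eq_mul, hoff, ← Nat.card_eq_fintype_card, ← mul_add, ← hB.ncard_inter_span_singleton hu,
    add_comm, Set.ncard_inter_add_ncard_sdiff_eq_ncard]

open Classical in
theorem IsCone.sum_lineCard_mul [Finite F] [Fintype E] (hB : IsCone F B) (g : ℕ → ℤ) :
    ∑ u : E, ∑ w ∈ lineMates F u, (lineCard F B u w : ℤ) * g (lineCard F B u w) =
      (Nat.card F + 1) * ∑ u : E with u ∈ B, ∑ w ∈ lineMates F u, g (lineCard F B u w) := by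
  have := Fintype.ofFinite F
  let L : Finset (E × E) := {t | t.2 ∈ lineMates F t.1}
  have hmem {t : E × E} : t ∈ L ↔ LinearIndependent F ![t.1, t.2] := by simp [L, mem_lineMates]
  have hshift (x : F) : ∑ t ∈ L with x • t.1 + t.2 ∈ B, g (lineCard F B t.1 t.2) =
      ∑ t ∈ L with t.1 ∈ B, g (lineCard F B t.1 t.2) := by
    refine Finset.sum_bij' (fun t _ ↦ (x • t.1 + t.2, t.1)) (fun t _ ↦ (t.2, t.1 - x • t.2))
      (fun t ht ↦ ?_) (fun t ht ↦ ?_) (fun t _ ↦ by simp) (fun t _ ↦ by simp) (fun t ht ↦ ?_)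
    · rw [Finset.mem_filter, hmem] at ht ⊢
      exact ⟨(linearIndependent_pair_shift_iff x).2 ht.1, ht.2⟩
    · rw [Finset.mem_filter, hmem] at ht ⊢
      rw [← linearIndependent_pair_shift_iff x, add_sub_cancel]
      exact ht
    · rw [Finset.mem_filter, hmem] at ht
      rw [hB.lineCard_shift ht.1]
  calc ∑ u : E, ∑ w ∈ lineMates F u, (lineCard F B u w : ℤ) * g (lineCard F B u w)
    _ = ∑ t ∈ L, (lineCard F B t.1 t.2 : ℤ) * g (lineCard F B t.1 t.2) :=
      (Finset.sum_finset_product L Finset.univ (lineMates F) (by simp [L])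
        (f := fun t ↦ (lineCard F B t.1 t.2 : ℤ) * g (lineCard F B t.1 t.2))).symm
    _ = ∑ t ∈ L with t.1 ∈ B, g (lineCard F B t.1 t.2) +
        ∑ x : F, ∑ t ∈ L with x • t.1 + t.2 ∈ B, g (lineCard F B t.1 t.2) := by
      simp only [Finset.sum_filter]
      rw [Finset.sum_comm, ← Finset.sum_add_distrib]
      refine Finset.sum_congr rfl fun t _ ↦ ?_
      generalize g (lineCard F B t.1 t.2) = z
      rw [lineCard_eq_ite_add_sum_ite]
      push_cast
      simp only [add_mul, Finset.sum_mul, ite_mul, one_mul, zero_mul]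
    _ = (Nat.card F + 1) * ∑ t ∈ L with t.1 ∈ B, g (lineCard F B t.1 t.2) := by
      rw [Finset.sum_congr rfl fun x _ ↦ hshift x, Finset.sum_const, Finset.card_univ,
        Nat.card_eq_fintype_card, nsmul_eq_mul]
      ring
    _ = _ := by
      congr 1
      exact Finset.sum_finset_product _ {u | u ∈ B} (lineMates F) (by simp [L, and_comm])

end DoubleCounting

section PlaneCounting

variable {F E : Type*} [Field F] [Finite F] [AddCommGroup E] [Module F E] {B : Set E} {u w : E}

theorem IsCone.ncard_eq_mul_pointCard [Finite E] (hB : IsCone F B) (hE : finrank F E = 3) :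
    B.ncard = (Nat.card F - 1) * pointCard F B := by
  have := Fintype.ofFinite F
  obtain ⟨u, w, huw⟩ := exists_linearIndependent_pair (F := F) (E := E) (by omega)
  obtain ⟨v, hv⟩ := exists_linearIndependent_triple huw (by omega)
  rw [hB.pointCard_eq_lineCard_add_sum hE hv, ← hB.ncard_eq_mul_lineCard_add_sum hE hv]

theorem IsCone.sum_sub_lineCard [Finite E] (hB : IsCone F B) (hu : u ≠ 0)
    (hE : finrank F E = 3) (c : ℤ) :
    ∑ w ∈ lineMates F u, (c - lineCard F B u w) = Nat.card F * ((Nat.card F - 1) *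
      ((Nat.card F + 1) * c - pointCard F B - Nat.card F * B.indicator 1 u)) := by
  have hmates := card_lineMates_add (F := F) hu
  have htrace := hB.sum_card_affineTrace_lineMates hu
  rw [hB.ncard_eq_mul_pointCard hE] at htrace
  have hK : 1 ≤ Nat.card F := Finite.card_pos
  have hind : ((B.indicator 1 u : ℕ) : ℤ) = B.indicator 1 u := by
    by_cases huB : u ∈ B <;> simp [huB]
  rw [hE] at hmates
  simp only [lineCard]
  push_cast [Finset.sum_sub_distrib, Finset.sum_add_distrib]
  rw [Finset.sum_const, Finset.sum_const, nsmul_eq_mul, nsmul_eq_mul, hind]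
  zify [hK] at hmates htrace
  rw [hind] at htrace
  linear_combination (c - B.indicator 1 u) * hmates - htrace

open Classical in
theorem IsCone.cast_card_filter_mem [Fintype E] (hB : IsCone F B) (hE : finrank F E = 3) :
    (({u | u ∈ B} : Finset E).card : ℤ) = (Nat.card F - 1) * pointCard F B := by
  have hn := hB.ncard_eq_mul_pointCard hE
  rw [← Set.ncard_coe_finset, Finset.coe_filter_univ]
  zify [Finite.card_pos (α := F)] at hn
  exact hn

open Classical in
theorem IsCone.sum_mem_sum_sub_lineCard [Fintype E] (hB : IsCone F B) (hE : finrank F E = 3)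
    (c : ℤ) : ∑ u : E with u ∈ B, ∑ w ∈ lineMates F u, (c - lineCard F B u w) =
      Nat.card F * (Nat.card F - 1) ^ 2 * pointCard F B *
        ((Nat.card F + 1) * c - pointCard F B - Nat.card F) := by
  have hmem (u : E) (hu : u ∈ ({u | u ∈ B} : Finset E)) :
      ∑ w ∈ lineMates F u, (c - lineCard F B u w : ℤ) = Nat.card F * ((Nat.card F - 1) *
        ((Nat.card F + 1) * c - pointCard F B - Nat.card F)) := by
    rw [Finset.mem_filter_univ] at hu
    rw [hB.sum_sub_lineCard (ne_of_mem_of_not_mem hu hB.zero_notMem) hE,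
      Set.indicator_of_mem hu, Pi.one_apply, mul_one]
  rw [Finset.sum_eq_card_nsmul hmem, nsmul_eq_mul, hB.cast_card_filter_mem hE]
  ring

theorem IsCone.sum_sum_sub_lineCard [Fintype E] (hB : IsCone F B) (hE : finrank F E = 3)
    (c : ℤ) : ∑ u : E, ∑ w ∈ lineMates F u, (c - lineCard F B u w) =
      Nat.card F * (Nat.card F - 1) ^ 2 * ((Nat.card F ^ 2 + Nat.card F + 1) *
        ((Nat.card F + 1) * c - pointCard F B) - Nat.card F * pointCard F B) := by
  classical
  have h0 : ∑ w ∈ lineMates F (0 : E), (c - lineCard F B 0 w : ℤ) = 0 :=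
    Finset.sum_eq_zero fun w hw ↦ absurd rfl ((mem_lineMates.1 hw).ne_zero 0)
  have hind : ∑ u ∈ Finset.univ.erase 0, B.indicator (1 : E → ℤ) u =
      (Nat.card F - 1) * pointCard F B := by
    rw [Finset.sum_erase _ (by simp [hB.zero_notMem]), ← hB.cast_card_filter_mem hE]
    simp [Set.indicator_apply]
  have hcard : (((Finset.univ.erase 0 : Finset E).card : ℕ) : ℤ) = Nat.card F ^ 3 - 1 := by
    rw [Finset.card_erase_of_mem (Finset.mem_univ _), Finset.card_univ,
      ← Nat.card_eq_fintype_card, Module.natCard_eq_pow_finrank (K := F) (V := E), hE,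
      Nat.cast_sub (Nat.one_le_pow _ _ Finite.card_pos)]
    push_cast
    rfl
  rw [← Finset.sum_erase (f := fun u ↦ ∑ w ∈ lineMates F u, (c - lineCard F B u w : ℤ)) _ h0,
    Finset.sum_congr rfl fun u hu ↦ hB.sum_sub_lineCard (Finset.ne_of_mem_erase hu) hE c,
    ← Finset.mul_sum, ← Finset.mul_sum, Finset.sum_sub_distrib, ← Finset.mul_sum, hind,
    Finset.sum_const, nsmul_eq_mul, hcard]
  ring

theorem IsCone.sum_lineCard_sub_one_mul [Fintype E] (hB : IsCone F B)
    (hE : finrank F E = 3) (c : ℤ) :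
    ∑ u : E, ∑ w ∈ lineMates F u, ((lineCard F B u w : ℤ) - 1) * (c - lineCard F B u w) =
      Nat.card F * (Nat.card F - 1) ^ 2 *
        (Nat.card F * pointCard F B * ((Nat.card F + 1) * c - Nat.card F - pointCard F B) -
          (Nat.card F ^ 2 + Nat.card F + 1 - pointCard F B) *
            ((Nat.card F + 1) * c - pointCard F B)) := by
  classical
  simp only [sub_mul, Finset.sum_sub_distrib (f := fun w ↦ (lineCard F B _ w : ℤ) * _), one_mul]
  rw [Finset.sum_sub_distrib, hB.sum_lineCard_mul fun N ↦ (c - N : ℤ),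
    hB.sum_mem_sum_sub_lineCard hE, hB.sum_sum_sub_lineCard hE]
  ring

end PlaneCounting

section CodeUnitals

open Polynomial

/-- A cone in a three-dimensional space over the field with `q ^ 2` elements whose projective
points form a set of points of type `1 mod p` meeting every line in at most `q + 1` points, and
whose moments along the lines through a point behave as for codewords: the `k`-th power sums of
the affine traces on the lines `⟨u, y • v + w⟩` are given by a polynomial in `y` of degree at most
`k`, with `k`-th coefficient coming from the line `⟨u, v⟩`. -/
structure IsCodeUnital (F : Type*) {E : Type*} [Field F] [Fintype F] [AddCommGroup E] [Module F E]
    (q : ℕ) (B : Set E) : Prop extends IsCone F B where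
  three_le : 3 ≤ q
  card_field : Fintype.card F = q ^ 2
  finrank_eq : finrank F E = 3
  cast_lineCard : ∀ u w, LinearIndependent F ![u, w] → (lineCard F B u w : F) = 1
  lineCard_le : ∀ u w, LinearIndependent F ![u, w] → lineCard F B u w ≤ q + 1
  moments : ∀ u v w, LinearIndependent F ![u, v, w] → ∀ k ≤ q ^ 2 - 2, ∃ P : F[X],
    P.natDegree ≤ k ∧ (∀ y, P.eval y = ∑ x ∈ affineTrace F B u (y • v + w), x ^ k) ∧
      P.coeff k = ∑ x ∈ affineTrace F B u v, x ^ k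

namespace IsCodeUnital

variable {F E : Type*} [Field F] [Fintype F] [AddCommGroup E] [Module F E] {q : ℕ} {B : Set E}
  {u v w : E}

theorem natCard_field (h : IsCodeUnital F q B) : Nat.card F = q ^ 2 := by
  rw [Nat.card_eq_fintype_card, h.card_field]

theorem lineCard_pos (h : IsCodeUnital F q B) (huw : LinearIndependent F ![u, w]) :
    0 < lineCard F B u w := by
  by_contra! h0
  have := h.cast_lineCard u w huw
  simp [Nat.le_zero.1 h0] at this

theorem cast_eq_zero (h : IsCodeUnital F q B) : (q : F) = 0 := by
  have := FiniteField.cast_card_eq_zero F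
  rw [h.card_field, Nat.cast_pow] at this
  exact pow_eq_zero_iff two_ne_zero |>.1 this

theorem lineCard_ne (h : IsCodeUnital F q B) (huw : LinearIndependent F ![u, w]) :
    lineCard F B u w ≠ q := by
  intro hq
  have := h.cast_lineCard u w huw
  rw [hq, h.cast_eq_zero] at this
  exact zero_ne_one this

protected theorem finite (h : IsCodeUnital F q B) : Finite E := by
  have : Module.Finite F E := Module.finite_of_finrank_pos (by rw [h.finrank_eq]; norm_num)
  exact Module.finite_of_finite F

theorem exists_smul_add_notMem (h : IsCodeUnital F q B) (huw : LinearIndependent F ![u, w]) :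
    ∃ x : F, x • u + w ∉ B := by
  have hlt : (affineTrace F B u w).card < (Finset.univ : Finset F).card := by
    have hle := h.lineCard_le u w huw
    rw [lineCard] at hle
    rw [Finset.card_univ, h.card_field]
    nlinarith [h.three_le]
  obtain ⟨x, -, hx⟩ := Finset.exists_mem_notMem_of_card_lt_card hlt
  exact ⟨x, mt mem_affineTrace.2 hx⟩

theorem exists_notMem_lineCard_eq (h : IsCodeUnital F q B) (huw : LinearIndependent F ![u, w]) :
    ∃ u' w', LinearIndependent F ![u', w'] ∧ u' ∉ B ∧ lineCard F B u' w' = lineCard F B u w := by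
  have := h.finite
  obtain ⟨x, hx⟩ := h.exists_smul_add_notMem huw
  exact ⟨x • u + w, u, (linearIndependent_pair_shift_iff x).2 huw, hx, h.lineCard_shift huw x⟩

theorem exists_mem_lineCard_eq (h : IsCodeUnital F q B) (huw : LinearIndependent F ![u, w]) :
    ∃ u' w', LinearIndependent F ![u', w'] ∧ u' ∈ B ∧ lineCard F B u' w' = lineCard F B u w := by
  have := h.finite
  by_cases hu : u ∈ B
  · exact ⟨u, w, huw, hu, rfl⟩
  · have hpos := h.lineCard_pos huw
    rw [lineCard_of_notMem hu] at hpos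
    obtain ⟨x, hx⟩ := Finset.card_pos.1 hpos
    exact ⟨x • u + w, u, (linearIndependent_pair_shift_iff x).2 huw, mem_affineTrace.1 hx,
      h.lineCard_shift huw x⟩

theorem pointCard_eq (h : IsCodeUnital F q B) (huvw : LinearIndependent F ![u, v, w]) :
    pointCard F B = lineCard F B u v + ∑ y : F, (affineTrace F B u (y • v + w)).card := by
  have := h.finite
  exact h.pointCard_eq_lineCard_add_sum h.finrank_eq huvw

theorem sum_lineCard_sub_le (h : IsCodeUnital F q B) (huvw : LinearIndependent F ![u, v, w])
    (hu : u ∉ B) : ∑ y : F, (lineCard F B u w - lineCard F B u (y • v + w)) ≤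
      lineCard F B u w * (lineCard F B u w - 1) := by
  simp only [lineCard_of_notMem hu]
  have hle := h.lineCard_le u w
    (linearIndependent_pair_of_triple (linearIndependent_triple_swap huvw))
  rw [lineCard_of_notMem hu] at hle
  have hq : 2 * q ≤ q ^ 2 - 2 := Nat.le_sub_of_add_le (by nlinarith [h.three_le])
  refine sum_sub_card_le_of_powerSums (S := fun y ↦ affineTrace F B u (y • v + w)) (y₀ := 0)
    (by rw [zero_smul, zero_add]) fun k hk ↦ ?_
  obtain ⟨P, hdeg, heval, -⟩ := h.moments u v w huvw k (by omega)
  exact ⟨P, hdeg, heval⟩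

theorem sq_mul_lineCard_add_lineCard_le (h : IsCodeUnital F q B)
    (huvw : LinearIndependent F ![u, v, w]) (hu : u ∉ B) :
    q ^ 2 * lineCard F B u w + lineCard F B u v ≤
      pointCard F B + lineCard F B u w * (lineCard F B u w - 1) := by
  have hsum : ∑ _y : F, lineCard F B u w ≤ ∑ y : F, (lineCard F B u w -
      lineCard F B u (y • v + w)) + ∑ y : F, (affineTrace F B u (y • v + w)).card := by
    rw [← Finset.sum_add_distrib]
    refine Finset.sum_le_sum fun y _ ↦ ?_
    rw [← lineCard_of_notMem hu]
    exact le_tsub_add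
  have hdefect := h.sum_lineCard_sub_le huvw hu
  have hpencil := h.pointCard_eq huvw
  rw [Finset.sum_const, Finset.card_univ, h.card_field, smul_eq_mul] at hsum
  omega

theorem exists_lineCard_eq_add_one (h : IsCodeUnital F q B) :
    ∃ u w, LinearIndependent F ![u, w] ∧ u ∉ B ∧ lineCard F B u w = q + 1 := by
  have := h.finite
  have hdim : 2 < finrank F E := by rw [h.finrank_eq]; norm_num
  obtain ⟨u₀, w₀, h₀⟩ := exists_linearIndependent_pair (F := F) (E := E) (by omega)
  have : Nonempty {t : E × E // LinearIndependent F ![t.1, t.2]} := ⟨⟨(u₀, w₀), h₀⟩⟩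
  obtain ⟨⟨⟨u₁, w₁⟩, h₁⟩, hmax⟩ := Finite.exists_max
    fun t : {t : E × E // LinearIndependent F ![t.1, t.2]} ↦ lineCard F B t.1.1 t.1.2
  simp only [Subtype.forall, Prod.forall] at hmax
  obtain ⟨u, w, huw, hu, hN⟩ := h.exists_notMem_lineCard_eq h₁
  obtain ⟨P, w', hPw', hP, -⟩ := h.exists_mem_lineCard_eq h₁
  obtain ⟨v, hv⟩ := exists_linearIndependent_triple huw hdim
  obtain ⟨v', hv'⟩ := exists_linearIndependent_triple hPw' hdim
  refine ⟨u, w, huw, hu, (h.lineCard_le u w huw).antisymm ?_⟩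
  have hlower := h.sq_mul_lineCard_add_lineCard_le (linearIndependent_triple_swap hv) hu
  have hpos := h.lineCard_pos (linearIndependent_pair_of_triple (linearIndependent_triple_swap hv))
  have hupper := h.pointCard_eq hv'
  have hsum : ∑ y : F, (affineTrace F B P (y • w' + v')).card ≤
      ∑ y : F, (lineCard F B u w - 1) := by
    refine Finset.sum_le_sum fun y _ ↦ ?_
    have := hmax P (y • w' + v') (linearIndependent_pair_smul_add hv' y)
    rw [lineCard_of_mem hP, ← hN] at this
    omega
  have hPle := hmax P w' hPw'
  rw [Finset.sum_const, Finset.card_univ, h.card_field, smul_eq_mul] at hsum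
  have huw_pos := h.lineCard_pos huw
  rw [← hN] at hPle
  obtain ⟨m, hm⟩ : ∃ m, lineCard F B u w = m + 1 := ⟨lineCard F B u w - 1, by omega⟩
  simp only [hm, Nat.add_sub_cancel] at hlower hsum hPle ⊢
  by_contra! hlt
  nlinarith

theorem cube_add_one_le_pointCard (h : IsCodeUnital F q B) : q ^ 3 + 1 ≤ pointCard F B := by
  have hq := h.three_le
  obtain ⟨u, w, huw, hu, hN⟩ := h.exists_lineCard_eq_add_one
  by_cases hsecant : ∃ v, LinearIndependent F ![u, v, w] ∧ lineCard F B u v = q + 1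
  · obtain ⟨v, hv, hNv⟩ := hsecant
    have hlower := h.sq_mul_lineCard_add_lineCard_le hv hu
    rw [hN, hNv, Nat.add_sub_cancel] at hlower
    linarith
  · push Not at hsecant
    exfalso
    obtain ⟨v, hv⟩ := exists_linearIndependent_triple huw (by rw [h.finrank_eq]; norm_num)
    have hv' := linearIndependent_triple_swap hv
    have hlower := h.sq_mul_lineCard_add_lineCard_le hv' hu
    have hpos := h.lineCard_pos (linearIndependent_pair_of_triple hv')
    have hpencil := h.pointCard_eq hv
    have hsum : ∑ y : F, (affineTrace F B u (y • w + v)).card ≤ ∑ y : F, (q - 1) := by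
      refine Finset.sum_le_sum fun y _ ↦ ?_
      have hyv := linearIndependent_pair_smul_add hv y
      have hne := hsecant _ (linearIndependent_triple_shift hv y)
      have hne' := h.lineCard_ne hyv
      have hle := h.lineCard_le _ _ hyv
      rw [lineCard_of_notMem hu] at hne hne' hle
      omega
    rw [Finset.sum_const, Finset.card_univ, h.card_field, smul_eq_mul] at hsum
    obtain ⟨m, rfl⟩ : ∃ m, q = m + 3 := ⟨q - 3, by omega⟩
    rw [hN, Nat.add_sub_cancel] at hlower
    rw [hN] at hpencil
    rw [show m + 3 - 1 = m + 2 from rfl] at hsum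
    nlinarith

theorem defect_nonneg (h : IsCodeUnital F q B) (huw : LinearIndependent F ![u, w]) :
    0 ≤ ((lineCard F B u w : ℤ) - 1) * ((q : ℤ) + 1 - lineCard F B u w) := by
  have hpos := h.lineCard_pos huw
  have hle := h.lineCard_le u w huw
  exact mul_nonneg (by omega) (by omega)

theorem sum_defect_eq [Fintype E] (h : IsCodeUnital F q B) :
    ∑ u : E, ∑ w ∈ lineMates F u, ((lineCard F B u w : ℤ) - 1) * ((q : ℤ) + 1 - lineCard F B u w) =
      -(q ^ 2 * (q ^ 2 - 1) ^ 2 * (q ^ 2 + 1) * (pointCard F B - (q ^ 2 + q + 1)) *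
        (pointCard F B - (q ^ 3 + 1))) := by
  rw [h.sum_lineCard_sub_one_mul h.finrank_eq (q + 1), h.natCard_field]
  push_cast
  ring

theorem pointCard_eq_cube_add_one (h : IsCodeUnital F q B) : pointCard F B = q ^ 3 + 1 := by
  have := h.finite
  have := Fintype.ofFinite E
  have hq : (3 : ℤ) ≤ q := by exact_mod_cast h.three_le
  have hlower := h.cube_add_one_le_pointCard
  refine hlower.antisymm' ?_
  have hsum : 0 ≤ ∑ u : E, ∑ w ∈ lineMates F u,
      ((lineCard F B u w : ℤ) - 1) * ((q : ℤ) + 1 - lineCard F B u w) :=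
    Finset.sum_nonneg fun u _ ↦ Finset.sum_nonneg fun w hw ↦ h.defect_nonneg (mem_lineMates.1 hw)
  rw [h.sum_defect_eq, neg_nonneg] at hsum
  have hsq : 0 < (q : ℤ) ^ 2 - 1 := by nlinarith
  have hgap : 0 < (pointCard F B : ℤ) - (q ^ 2 + q + 1) := by
    zify at hlower
    nlinarith only [hq, hlower]
  have := nonpos_of_mul_nonpos_right hsum (by positivity)
  zify
  linarith

theorem lineCard_eq_one_or_eq (h : IsCodeUnital F q B) (huw : LinearIndependent F ![u, w]) :
    lineCard F B u w = 1 ∨ lineCard F B u w = q + 1 := by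
  have := h.finite
  have := Fintype.ofFinite E
  have hsum := h.sum_defect_eq
  have hdefect (u w : E) (hw : w ∈ lineMates F u) := h.defect_nonneg (mem_lineMates.1 hw)
  rw [h.pointCard_eq_cube_add_one, Nat.cast_add, Nat.cast_pow, Nat.cast_one, sub_self, mul_zero,
    neg_zero, Finset.sum_eq_zero_iff_of_nonneg fun u _ ↦ Finset.sum_nonneg (hdefect u)] at hsum
  have hzero := (Finset.sum_eq_zero_iff_of_nonneg (hdefect u)).1 (hsum u (Finset.mem_univ u)) w
    (mem_lineMates.2 huw)
  rcases mul_eq_zero.1 hzero with h1 | h1 <;> omega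

end IsCodeUnital

end CodeUnitals

section TraceTransformations

variable {F E : Type*} [Field F] [Finite F] [AddCommGroup E] [Module F E] {B : Set E} {u v w : E}

theorem affineTrace_smul_add_self (c : F) :
    affineTrace F B u (c • u + w) = (affineTrace F B u w).map (Equiv.subRight c).toEmbedding := by
  ext x
  rw [Finset.mem_map_equiv, Equiv.subRight_symm_apply, mem_affineTrace, mem_affineTrace, add_smul,
    add_assoc]

theorem IsCone.affineTrace_smul (hB : IsCone F B) {c : F} (hc : c ≠ 0) :
    affineTrace F B u (c • w) =
      (affineTrace F B u w).map (Equiv.mulLeft₀ c hc).toEmbedding := by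
  ext x
  rw [Finset.mem_map_equiv, mem_affineTrace, mem_affineTrace,
    ← hB.smul_mem_iff hc (v := _ • u + w), smul_add, smul_smul, Equiv.mulLeft₀_symm_apply,
    mul_inv_cancel_left₀ hc]

theorem IsCone.sum_affineTrace_swap (hB : IsCone F B) (hu : u ∉ B) (hw : w ∉ B) :
    ∑ x ∈ affineTrace F B w u, x = ∑ x ∈ affineTrace F B u w, x⁻¹ := by
  have hinv {u w : E} (hu : u ∉ B) {x : F} (hx : x ∈ affineTrace F B w u) :
      x⁻¹ ∈ affineTrace F B u w := by
    rw [mem_affineTrace] at hx ⊢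
    have hx0 : x ≠ 0 := by
      rintro rfl
      simp [hu] at hx
    have := hB.smul_mem x⁻¹ (inv_ne_zero hx0) _ hx
    rwa [smul_add, inv_smul_smul₀ hx0, add_comm] at this
  exact Finset.sum_nbij' (·⁻¹) (·⁻¹) (fun _ ↦ hinv hu) (fun _ ↦ hinv hw) (fun x _ ↦ inv_inv x)
    (fun x _ ↦ inv_inv x) (fun x _ ↦ (inv_inv x).symm)

theorem IsCone.lineCard_comm [Finite E] (hB : IsCone F B) (huw : LinearIndependent F ![u, w]) :
    lineCard F B u w = lineCard F B w u :=
  hB.lineCard_eq_of_span_eq huw (LinearIndependent.pair_symm_iff.1 huw) (by rw [Set.pair_comm])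

theorem affineTrace_eq_singleton_zero_of_card_eq_one (hcard : (affineTrace F B u w).card = 1)
    (hw : w ∈ B) : affineTrace F B u w = {0} := by
  obtain ⟨x, hx⟩ := Finset.card_eq_one.1 hcard
  have h0 : 0 ∈ affineTrace F B u w := by simpa [mem_affineTrace] using hw
  rw [hx, Finset.mem_singleton] at h0
  rw [hx, h0]

theorem affineTrace_eq_singleton_zero_of_sum_eq_zero
    (hcard : (affineTrace F B u w).card = 1) (hsum : ∑ x ∈ affineTrace F B u w, x = 0) :
    affineTrace F B u w = {0} := by
  obtain ⟨x, hx⟩ := Finset.card_eq_one.1 hcard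
  rw [hx, Finset.sum_singleton] at hsum
  rw [hx, hsum]

theorem mem_of_affineTrace_eq_singleton_zero (h : affineTrace F B u w = {0}) : w ∈ B := by
  simpa [mem_affineTrace] using h.ge (Finset.mem_singleton_self 0)

end TraceTransformations

section TangentLines

namespace IsCodeUnital

variable {F E : Type*} [Field F] [Fintype F] [AddCommGroup E] [Module F E] {q : ℕ} {B : Set E}
  {u v w : E}

theorem lineCard_eq_of_lineCard_eq_one (h : IsCodeUnital F q B)
    (huvw : LinearIndependent F ![u, v, w]) (hu : u ∈ B) (hv : lineCard F B u v = 1) :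
    lineCard F B u w = q + 1 := by
  classical
  refine (h.lineCard_eq_one_or_eq
    (linearIndependent_pair_of_triple (linearIndependent_triple_swap huvw))).resolve_left
      fun hw ↦ ?_
  rw [lineCard_of_mem hu, Nat.add_eq_left] at hw
  have hle (y : F) : (affineTrace F B u (y • v + w)).card ≤ q := by
    have := h.lineCard_le u _ (linearIndependent_pair_smul_add huvw y)
    rw [lineCard_of_mem hu] at this
    omega
  have hcard := h.pointCard_eq huvw
  rw [h.pointCard_eq_cube_add_one, hv, ← Finset.add_sum_erase _ _ (Finset.mem_univ (0 : F)),
    zero_smul, zero_add, hw, zero_add, add_comm, Nat.add_left_cancel_iff] at hcard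
  have hsum := Finset.sum_le_card_nsmul (Finset.univ.erase (0 : F)) _ _ fun y _ ↦ hle y
  rw [← hcard, Finset.card_erase_of_mem (Finset.mem_univ _), Finset.card_univ, h.card_field,
    smul_eq_mul, Nat.sub_mul, one_mul, ← pow_succ] at hsum
  have hq := h.three_le
  exact absurd hsum (not_le.2 (Nat.sub_lt (by positivity) (by omega)))

theorem exists_lineCard_eq_one (h : IsCodeUnital F q B) (hu : u ≠ 0) :
    ∃ v, LinearIndependent F ![u, v] ∧ lineCard F B u v = 1 := by
  have := h.finite
  by_contra! hne
  have hsecant (v) (huv : LinearIndependent F ![u, v]) : lineCard F B u v = q + 1 :=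
    (h.lineCard_eq_one_or_eq huv).resolve_left (hne v huv)
  obtain ⟨v, huv⟩ := exists_linearIndependent_pair_of_one_lt_finrank
    (by rw [h.finrank_eq]; norm_num : 1 < finrank F E) hu
  obtain ⟨w, huvw⟩ := exists_linearIndependent_triple huv (by rw [h.finrank_eq]; norm_num)
  have hle (y : F) : q ≤ (affineTrace F B u (y • v + w)).card := by
    have := hsecant _ (linearIndependent_pair_smul_add huvw y)
    by_cases hu : u ∈ B
    · rw [lineCard_of_mem hu] at this
      omega
    · rw [lineCard_of_notMem hu] at this
      omega
  have hcard := h.pointCard_eq huvw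
  rw [h.pointCard_eq_cube_add_one, hsecant v huv] at hcard
  have hsum := Finset.card_nsmul_le_sum Finset.univ _ _ fun y (_ : y ∈ Finset.univ) ↦ hle y
  rw [Finset.card_univ, h.card_field, smul_eq_mul] at hsum
  have := h.three_le
  linarith

theorem card_affineTrace_eq_one_or_eq (h : IsCodeUnital F q B) (hu : u ∉ B)
    (huw : LinearIndependent F ![u, w]) :
    (affineTrace F B u w).card = 1 ∨ (affineTrace F B u w).card = q + 1 := by
  simpa only [lineCard_of_notMem hu] using h.lineCard_eq_one_or_eq huw

theorem card_tangents (h : IsCodeUnital F q B) (huvw : LinearIndependent F ![u, v, w])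
    (hu : u ∉ B) (hv : lineCard F B u v = 1) :
    {y : F | (affineTrace F B u (y • v + w)).card = 1}.ncard = q := by
  classical
  have hcard (y : F) : (affineTrace F B u (y • v + w)).card +
      q * (if (affineTrace F B u (y • v + w)).card = 1 then 1 else 0) = q + 1 := by
    rcases h.card_affineTrace_eq_one_or_eq hu (linearIndependent_pair_smul_add huvw y) with h1 | h1
    · rw [h1, if_pos rfl, mul_one, add_comm]
    · have := h.three_le
      rw [h1, if_neg (by omega), mul_zero, add_zero]
  have hsum := Finset.sum_congr rfl fun y (_ : y ∈ Finset.univ) ↦ hcard y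
  have hpencil := h.pointCard_eq huvw
  rw [h.pointCard_eq_cube_add_one, hv] at hpencil
  rw [Finset.sum_add_distrib, ← Finset.mul_sum, ← Finset.card_filter, Finset.sum_const,
    Finset.card_univ, h.card_field, smul_eq_mul] at hsum
  rw [Set.ncard_eq_toFinset_card', Set.toFinset_ofPred]
  refine Nat.eq_of_mul_eq_mul_left (by linarith [h.three_le] : 0 < q) ?_
  linarith

theorem sum_affineTrace_smul_add_smul (h : IsCodeUnital F q B)
    (huvw : LinearIndependent F ![u, v, w]) {b c : F} (hbc : b ≠ 0 ∨ c ≠ 0) :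
    ∑ x ∈ affineTrace F B u (b • v + c • w), x =
      b * ∑ x ∈ affineTrace F B u v, x + c * ∑ x ∈ affineTrace F B u w, x := by
  have hq := h.three_le
  obtain ⟨P, hP, heval, hcoeff⟩ := h.moments u v w huvw 1 (Nat.le_sub_of_add_le (by nlinarith))
  obtain ⟨a, a', rfl⟩ := Polynomial.exists_eq_X_add_C_of_natDegree_le_one hP
  have h0 := heval 0
  simp only [pow_one] at heval hcoeff h0
  simp only [Polynomial.coeff_add, Polynomial.coeff_C_mul, Polynomial.coeff_X_one, mul_one,
    Polynomial.coeff_C_succ, add_zero] at hcoeff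
  simp only [Polynomial.eval_add, Polynomial.eval_mul, Polynomial.eval_C, Polynomial.eval_X,
    mul_zero, zero_add, zero_smul] at heval h0
  rw [← hcoeff, ← h0]
  rcases eq_or_ne c 0 with rfl | hc
  · have hb := hbc.resolve_right (not_not.2 rfl)
    simp [h.affineTrace_smul hb, Finset.mul_sum, hcoeff]
  · have hscale : b • v + c • w = c • ((c⁻¹ * b) • v + w) := by
      rw [smul_add, smul_smul, mul_inv_cancel_left₀ hc]
    rw [hscale, h.affineTrace_smul hc, Finset.sum_map]
    simp only [Equiv.toEmbedding_apply, Equiv.mulLeft₀_apply]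
    rw [← Finset.mul_sum, ← heval]
    field_simp

theorem sum_affineTrace_smul_add_self (h : IsCodeUnital F q B) (hu : u ∉ B)
    (huw : LinearIndependent F ![u, w]) (c : F) :
    ∑ x ∈ affineTrace F B u (c • u + w), x = ∑ x ∈ affineTrace F B u w, x - c := by
  have hcard := h.cast_lineCard u w huw
  rw [lineCard_of_notMem hu] at hcard
  rw [affineTrace_smul_add_self, Finset.sum_map]
  simp [Finset.sum_sub_distrib, hcard]

end IsCodeUnital

end TangentLines

section TangentPencils

namespace IsCodeUnital

variable {F E : Type*} [Field F] [Fintype F] [AddCommGroup E] [Module F E] {q : ℕ} {B : Set E}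
  {R S P Q : E}

theorem exists_affineTrace_eq_singleton_zero (h : IsCodeUnital F q B) (hR : R ∉ B) (hR0 : R ≠ 0) :
    ∃ P, LinearIndependent F ![R, P] ∧ affineTrace F B R P = {0} := by
  obtain ⟨v, hv, hcard⟩ := h.exists_lineCard_eq_one hR0
  rw [lineCard_of_notMem hR] at hcard
  obtain ⟨x, hx⟩ := Finset.card_eq_one.1 hcard
  refine ⟨x • R + v, LinearIndependent.pair_symm_iff.1 ((linearIndependent_pair_shift_iff x).2 hv),
    affineTrace_eq_singleton_zero_of_card_eq_one ?_ ?_⟩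
  · rw [affineTrace_smul_add_self, Finset.card_map, hcard]
  · exact mem_affineTrace.1 (hx ▸ Finset.mem_singleton_self x)

theorem sum_affineTrace_smul_add_eq_zero (h : IsCodeUnital F q B)
    (hRPQ : LinearIndependent F ![R, P, Q]) (hP : affineTrace F B R P = {0})
    (hQ : ∑ x ∈ affineTrace F B R Q, x = 0) (y : F) :
    ∑ x ∈ affineTrace F B R (y • P + Q), x = 0 := by
  have := h.sum_affineTrace_smul_add_smul hRPQ (b := y) (Or.inr one_ne_zero)
  simpa [hP, hQ] using this

theorem ncard_mem_affineTrace_slanted (h : IsCodeUnital F q B) (hR : R ∉ B)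
    (hRPQ : LinearIndependent F ![R, P, Q]) (hP : affineTrace F B R P = {0}) {l y₀ : F}
    (hl : l ≠ 0) (hy₀ : affineTrace F B R (y₀ • P + Q) = {0}) :
    {y | l * (y - y₀) ∈ affineTrace F B R (y • P + Q)}.ncard = q + 1 := by
  have := h.finite
  have hmem : y₀ • P + Q ∈ B := mem_of_affineTrace_eq_singleton_zero hy₀
  have hnotMem : l • R + P ∉ B := fun hmem ↦
    hl (by simpa [hP] using (mem_affineTrace (F := F)).2 hmem)
  have hLI : LinearIndependent F ![y₀ • P + Q, R, l • R + P] := by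
    rw [linearIndependent_triple_iff] at hRPQ ⊢
    intro a b c habc
    obtain ⟨h1, h2, rfl⟩ := hRPQ (b + c * l) (a * y₀ + c) a (by rw [← habc]; module)
    obtain rfl : c = 0 := by simpa using h2
    exact ⟨rfl, by simpa using h1, rfl⟩
  have htangent : lineCard F B (y₀ • P + Q) R = 1 := by
    rw [h.lineCard_comm (linearIndependent_pair_of_triple hLI), lineCard_of_notMem hR, hy₀,
      Finset.card_singleton]
  have hsecant := h.lineCard_eq_of_lineCard_eq_one hLI hmem htangent
  rw [h.lineCard_comm (linearIndependent_pair_of_triple (linearIndependent_triple_swap hLI)),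
    lineCard_of_notMem hnotMem, ← Set.ncard_coe_finset] at hsecant
  have hset : {y | l * (y - y₀) ∈ affineTrace F B R (y • P + Q)} =
      (· - y₀) ⁻¹' (affineTrace F B (l • R + P) (y₀ • P + Q) : Set F) := by
    ext y
    rw [Set.mem_preimage, Finset.mem_coe, mem_affineTrace, Set.mem_ofPred_eq, mem_affineTrace]
    exact iff_of_eq (congrArg (· ∈ B) (by module))
  rw [hset, ← hsecant, Set.ncard_preimage_of_injective_subset_range sub_left_injective
    fun x _ ↦ ⟨x + y₀, add_sub_cancel_right x y₀⟩]

theorem isTangentFamily (h : IsCodeUnital F q B) (hR : R ∉ B)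
    (hRPQ : LinearIndependent F ![R, P, Q]) (hP : affineTrace F B R P = {0})
    (hQ : ∑ x ∈ affineTrace F B R Q, x = 0) :
    IsTangentFamily q {y | (affineTrace F B R (y • P + Q)).card = 1}
      fun y ↦ affineTrace F B R (y • P + Q) where
  three_le := h.three_le
  card_field := h.card_field
  card_tangents := by
    rw [← h.card_tangents hRPQ hR (by rw [lineCard_of_notMem hR, hP, Finset.card_singleton]),
      Set.ncard_eq_toFinset_card', Set.toFinset_ofPred]
  eq_singleton y hy := affineTrace_eq_singleton_zero_of_sum_eq_zero
    ((Finset.mem_filter_univ y).1 hy) (h.sum_affineTrace_smul_add_eq_zero hRPQ hP hQ y)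
  card_eq y hy := (h.card_affineTrace_eq_one_or_eq hR
    (linearIndependent_pair_smul_add hRPQ y)).resolve_left fun hcard ↦
      hy ((Finset.mem_filter_univ y).2 hcard)
  moments k hk hkq := by
    obtain ⟨p, hp, heval, hcoeff⟩ := h.moments R P Q hRPQ k hkq
    rw [hP, Finset.sum_singleton, zero_pow (by omega)] at hcoeff
    refine ⟨p, Polynomial.natDegree_le_iff_coeff_eq_zero.2 fun i hi ↦ ?_, heval⟩
    rcases (show k ≤ i by omega).eq_or_lt with rfl | hki
    · exact hcoeff
    · exact Polynomial.coeff_eq_zero_of_natDegree_lt (by omega)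
  ncard_zero_mem_le := by
    have hPQ : LinearIndependent F ![P, Q] :=(linearIndependent_finCons.1 hRPQ).1
    have hset : {y | 0 ∈ affineTrace F B R (y • P + Q)} =
        (affineTrace F B P Q : Set F) := by
      ext y
      simp [mem_affineTrace]
    rw [hset, Set.ncard_coe_finset]
    exact (Nat.le_add_left _ _).trans (h.lineCard_le P Q hPQ)
  ncard_line l hl y₀ hy₀ := h.ncard_mem_affineTrace_slanted hR hRPQ hP hl
    (affineTrace_eq_singleton_zero_of_sum_eq_zero ((Finset.mem_filter_univ y₀).1 hy₀)
      (h.sum_affineTrace_smul_add_eq_zero hRPQ hP hQ y₀))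

theorem exists_sum_inv_affineTrace_eq (h : IsCodeUnital F q B) (hR : R ∉ B)
    (hRPQ : LinearIndependent F ![R, P, Q]) (hP : affineTrace F B R P = {0})
    (hQ : ∑ x ∈ affineTrace F B R Q, x = 0) :
    ∃ e, ∀ y : F, (affineTrace F B R (y • P + Q)).card ≠ 1 →
      y • P + Q ∉ B ∧ ∑ x ∈ affineTrace F B R (y • P + Q), x⁻¹ = e := by
  obtain ⟨e, he⟩ := (h.isTangentFamily hR hRPQ hP hQ).exists_sum_inv_eq
  refine ⟨e, fun y hy ↦ ?_⟩
  have := he y (mt (Finset.mem_filter_univ y).1 hy)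
  rwa [mem_affineTrace, zero_smul, zero_add] at this

theorem sum_inv_affineTrace_eq_zero_of_tangents (h : IsCodeUnital F q B) (hR : R ∉ B)
    (hRPQ : LinearIndependent F ![R, P, Q]) (hP : affineTrace F B R P = {0})
    (hQ : affineTrace F B R Q = {0}) {y : F} (hy : (affineTrace F B R (y • P + Q)).card ≠ 1) :
    y • P + Q ∉ B ∧ ∑ x ∈ affineTrace F B R (y • P + Q), x⁻¹ = 0 := by
  obtain ⟨e, he⟩ := h.exists_sum_inv_affineTrace_eq hR hRPQ hP (by rw [hQ, Finset.sum_singleton])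
  obtain ⟨e', he'⟩ := h.exists_sum_inv_affineTrace_eq hR (linearIndependent_triple_swap hRPQ) hQ
    (by rw [hP, Finset.sum_singleton])
  have hswap (y : F) (hy : (affineTrace F B R (y • P + Q)).card ≠ 1) : e' = y * e := by
    have hy0 : y ≠ 0 := by
      rintro rfl
      simp [hQ] at hy
    have hscale : y⁻¹ • Q + P = y⁻¹ • (y • P + Q) := by
      rw [smul_add, inv_smul_smul₀ hy0, add_comm]
    have hinv := he' y⁻¹
    rw [hscale, h.affineTrace_smul (inv_ne_zero hy0), Finset.card_map, Finset.sum_map] at hinv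
    rw [← (hinv hy).2, ← (he y hy).2, Finset.mul_sum]
    simp [mul_comm]
  have hcompl : 1 < {y : F | (affineTrace F B R (y • P + Q)).card = 1}ᶜ.ncard := by
    have hadd := Set.ncard_add_ncard_compl {y : F | (affineTrace F B R (y • P + Q)).card = 1}
    rw [h.card_tangents hRPQ hR (by rw [lineCard_of_notMem hR, hP, Finset.card_singleton]),
      h.natCard_field] at hadd
    nlinarith [h.three_le]
  obtain ⟨y₁, hy₁, y₂, hy₂, hne⟩ := (Set.one_lt_ncard).1 hcompl
  have he0 : (y₁ - y₂) * e = 0 := by rw [sub_mul, ← hswap y₁ hy₁, ← hswap y₂ hy₂, sub_self]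
  rw [← (mul_eq_zero.1 he0).resolve_left (sub_ne_zero.2 hne)]
  exact he y hy

theorem sum_inv_affineTrace_eq_zero (h : IsCodeUnital F q B) (hR : R ∉ B)
    (hRS : LinearIndependent F ![R, S]) (hsum : ∑ x ∈ affineTrace F B R S, x = 0)
    (hcard : (affineTrace F B R S).card ≠ 1) :
    S ∉ B ∧ ∑ x ∈ affineTrace F B R S, x⁻¹ = 0 := by
  obtain ⟨P, hRP, hP⟩ := h.exists_affineTrace_eq_singleton_zero hR (hRS.ne_zero 0)
  have hRPS : LinearIndependent F ![R, P, S] := by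
    refine linearIndependent_triple_iff_notMem_span.2 ⟨hRP, fun hS ↦ hcard ?_⟩
    obtain ⟨a, b, rfl⟩ := Submodule.mem_span_pair.1 hS
    rw [affineTrace_smul_add_self,
      h.affineTrace_smul (ne_zero_of_linearIndependent_pair_smul_add_smul hRS), hP,
      Finset.card_map, Finset.card_map,
      Finset.card_singleton]
  have htangents := h.card_tangents hRPS hR
    (by rw [lineCard_of_notMem hR, hP, Finset.card_singleton])
  obtain ⟨y, hy⟩ := Set.nonempty_of_ncard_ne_zero (htangents.trans_ne (by linarith [h.three_le]))
  have hQ := affineTrace_eq_singleton_zero_of_sum_eq_zero hy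
    (h.sum_affineTrace_smul_add_eq_zero hRPS hP hsum y)
  have hS : S = -y • P + (y • P + S) := by module
  have hRPQ : LinearIndependent F ![R, P, y • P + S] :=
    linearIndependent_triple_swap (linearIndependent_triple_shift hRPS y)
  rw [hS] at hcard ⊢
  exact h.sum_inv_affineTrace_eq_zero_of_tangents hR hRPQ hP hQ hcard

end IsCodeUnital

end TangentPencils

section Polarity

/-- The functional `f` is an equation of the polar line of `R` with respect to the unital `B`: the
polar line passes through `R` iff `R ∈ B`, a line joining `R` to a point of its polar is tangent if
one of the two points lies on `B`, and for `R ∉ B` the polar is the locus of the points `S` with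
`∑ x ∈ affineTrace F B R S, x = 0`. -/
structure IsPolarForm {F E : Type*} [Field F] [Finite F] [AddCommGroup E] [Module F E]
    (B : Set E) (R : E) (f : E →ₗ[F] F) : Prop where
  ne_zero : f ≠ 0
  apply_self_eq_zero_iff : f R = 0 ↔ R ∈ B
  apply_eq_zero_iff_lineCard : ∀ S, LinearIndependent F ![R, S] → R ∈ B ∨ S ∈ B →
    (f S = 0 ↔ lineCard F B R S = 1)
  apply_eq_zero_iff_sum : ∀ S, LinearIndependent F ![R, S] → R ∉ B →
    (f S = 0 ↔ ∑ x ∈ affineTrace F B R S, x = 0)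

namespace IsCodeUnital

variable {F E : Type*} [Field F] [Fintype F] [AddCommGroup E] [Module F E] {q : ℕ} {B : Set E}
  {R S : E}

theorem exists_basis (h : IsCodeUnital F q B) (hRS : LinearIndependent F ![R, S]) :
    ∃ b : Basis (Fin 3) F E, b 0 = R ∧ b 1 = S := by
  have := h.finite
  obtain ⟨w, hw⟩ := exists_linearIndependent_triple hRS (by rw [h.finrank_eq]; norm_num)
  have hcard : Fintype.card (Fin 3) = finrank F E := by rw [h.finrank_eq, Fintype.card_fin]
  exact ⟨basisOfLinearIndependentOfCardEqFinrank hw hcard, by simp, by simp⟩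

theorem exists_functional_eq_neg_sum_affineTrace (h : IsCodeUnital F q B) (hR : R ∉ B)
    (hR0 : R ≠ 0) : ∃ f : E →ₗ[F] F, f R = 1 ∧
      ∀ S, LinearIndependent F ![R, S] → f S = -∑ x ∈ affineTrace F B R S, x := by
  obtain ⟨v, hRv⟩ := exists_linearIndependent_pair_of_one_lt_finrank
    (by rw [h.finrank_eq]; norm_num : 1 < finrank F E) hR0
  obtain ⟨b, rfl, -⟩ := h.exists_basis hRv
  have hb : LinearIndependent F ![b 0, b 1, b 2] := by
    convert b.linearIndependent using 1
    ext i
    fin_cases i <;> rfl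
  refine ⟨b.constr F
    ![1, -∑ x ∈ affineTrace F B (b 0) (b 1), x, -∑ x ∈ affineTrace F B (b 0) (b 2), x],
    by rw [b.constr_basis, Matrix.cons_val_zero], fun S hRS ↦ ?_⟩
  obtain ⟨a, c, d, rfl⟩ : ∃ a c d : F, S = a • b 0 + (c • b 1 + d • b 2) :=
    ⟨b.repr S 0, b.repr S 1, b.repr S 2,
      by rw [← add_assoc, ← Fin.sum_univ_three fun i ↦ b.repr S i • b i, b.sum_repr]⟩
  have hRS' : LinearIndependent F ![b 0, c • b 1 + d • b 2] :=
    (linearIndependent_pair_shift_iff a).1 (LinearIndependent.pair_symm_iff.1 hRS)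
  have hcd : c ≠ 0 ∨ d ≠ 0 := by
    by_contra! hcd
    exact hRS'.ne_zero 1 (by simp [hcd.1, hcd.2])
  rw [h.sum_affineTrace_smul_add_self hR hRS', h.sum_affineTrace_smul_add_smul hb hcd]
  simp only [map_add, map_smul, b.constr_basis, smul_eq_mul, Matrix.cons_val]
  ring

theorem exists_isPolarForm_of_notMem (h : IsCodeUnital F q B) (hR : R ∉ B) (hR0 : R ≠ 0) :
    ∃ f : E →ₗ[F] F, IsPolarForm B R f := by
  obtain ⟨f, hfR, hf⟩ := h.exists_functional_eq_neg_sum_affineTrace hR hR0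
  have hsum (S) (hRS : LinearIndependent F ![R, S]) :
      f S = 0 ↔ ∑ x ∈ affineTrace F B R S, x = 0 := by
    rw [hf S hRS, neg_eq_zero]
  refine ⟨f, ?_, by simp [hfR, hR], fun S hRS hmem ↦ ?_, fun S hRS _ ↦ hsum S hRS⟩
  · rintro rfl
    simp at hfR
  · have hS := hmem.resolve_left hR
    rw [hsum S hRS, lineCard_of_notMem hR]
    refine ⟨fun h0 ↦ ?_, fun hcard ↦ ?_⟩
    · by_contra hcard
      exact (h.sum_inv_affineTrace_eq_zero hR hRS h0 hcard).1 hS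
    · rw [affineTrace_eq_singleton_zero_of_card_eq_one hcard hS, Finset.sum_singleton]

theorem exists_isPolarForm_of_mem (h : IsCodeUnital F q B) (hR : R ∈ B) :
    ∃ f : E →ₗ[F] F, IsPolarForm B R f := by
  obtain ⟨v, hRv, hv⟩ := h.exists_lineCard_eq_one fun hR0 : R = 0 ↦ h.zero_notMem (hR0 ▸ hR)
  obtain ⟨b, rfl, rfl⟩ := h.exists_basis hRv
  refine ⟨b.coord 2, fun h0 ↦ ?_, iff_of_true (by simp) hR,
    fun S hRS _ ↦ ⟨fun hS ↦ ?_, fun hS ↦ ?_⟩, fun S _ hR' ↦ absurd hR hR'⟩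
  · simpa using LinearMap.congr_fun h0 (b 2)
  · have hS' : S = b.repr S 0 • b 0 + b.repr S 1 • b 1 := by
      have hsum := b.sum_repr S
      rw [Basis.coord_apply] at hS
      rwa [Fin.sum_univ_three, hS, zero_smul, add_zero, eq_comm] at hsum
    rw [hS'] at hRS ⊢
    rw [lineCard_of_mem hR, affineTrace_smul_add_self,
      h.affineTrace_smul (ne_zero_of_linearIndependent_pair_smul_add_smul hRS), Finset.card_map,
      Finset.card_map, ← lineCard_of_mem hR, hv]
  · by_contra hne
    have hRvS : LinearIndependent F ![b 0, b 1, S] := by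
      refine linearIndependent_triple_iff_notMem_span.2 ⟨hRv, fun hmem ↦ hne ?_⟩
      obtain ⟨a, c, rfl⟩ := Submodule.mem_span_pair.1 hmem
      simp
    have := h.lineCard_eq_of_lineCard_eq_one hRvS hR hv
    have := h.three_le
    omega

theorem exists_isPolarForm (h : IsCodeUnital F q B) (hR0 : R ≠ 0) :
    ∃ f : E →ₗ[F] F, IsPolarForm B R f := by
  by_cases hR : R ∈ B
  · exact h.exists_isPolarForm_of_mem hR
  · exact h.exists_isPolarForm_of_notMem hR hR0

end IsCodeUnital

namespace IsPolarForm

variable {F E : Type*} [Field F] [Fintype F] [AddCommGroup E] [Module F E] {q : ℕ} {B : Set E}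
  {R S : E} {f g : E →ₗ[F] F}

theorem card_affineTrace_eq (hf : IsPolarForm B R f) (h : IsCodeUnital F q B)
    (hRS : LinearIndependent F ![R, S]) (hR : R ∉ B) (hS : S ∉ B) (hfS : f S = 0) :
    (affineTrace F B R S).card = q + 1 := by
  refine (h.card_affineTrace_eq_one_or_eq hR hRS).resolve_left fun hcard ↦ hS ?_
  exact mem_of_affineTrace_eq_singleton_zero (affineTrace_eq_singleton_zero_of_sum_eq_zero hcard
    ((hf.apply_eq_zero_iff_sum S hRS hR).1 hfS))

theorem apply_eq_zero_symm (hf : IsPolarForm B R f) (hg : IsPolarForm B S g)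
    (h : IsCodeUnital F q B) (hS0 : S ≠ 0) (hfS : f S = 0) : g R = 0 := by
  have := h.finite
  by_cases hRS : LinearIndependent F ![R, S]
  · have hSR := LinearIndependent.pair_symm_iff.1 hRS
    by_cases hmem : R ∈ B ∨ S ∈ B
    · rw [hg.apply_eq_zero_iff_lineCard R hSR hmem.symm, h.lineCard_comm hSR]
      exact (hf.apply_eq_zero_iff_lineCard S hRS hmem).1 hfS
    · push Not at hmem
      have hcard := hf.card_affineTrace_eq h hRS hmem.1 hmem.2 hfS
      rw [hg.apply_eq_zero_iff_sum R hSR hmem.2, h.sum_affineTrace_swap hmem.1 hmem.2]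
      exact (h.sum_inv_affineTrace_eq_zero hmem.1 hRS
        ((hf.apply_eq_zero_iff_sum S hRS hmem.1).1 hfS) (by have := h.three_le; omega)).2
  · obtain ⟨c, rfl⟩ : ∃ c : F, c • S = R := by
      by_contra! hc
      exact hRS (LinearIndependent.pair_symm_iff.1 ((LinearIndependent.pair_iff' hS0).2 hc))
    rcases eq_or_ne c 0 with rfl | hc
    · rw [zero_smul, map_zero]
    · have hfR : f (c • S) = 0 := by rw [map_smul, hfS, smul_zero]
      rw [map_smul, hg.apply_self_eq_zero_iff.2
        ((h.smul_mem_iff hc).1 (hf.apply_self_eq_zero_iff.1 hfR)), smul_zero]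

end IsPolarForm

end Polarity

section DiagonalPolarities

/-- A polarity of a projective space in coordinates for which the standard frame is self-polar:
the hyperplane polar to the point `v` has the coefficient vector `φ v`, only defined up to a scalar
factor depending on `v`, and incidence is symmetric. The value at `0` is irrelevant. -/
structure IsDiagonalPolarity {F ι : Type*} [Field F] [Fintype ι] (φ : (ι → F) → ι → F) : Prop where
  apply_eq_zero_iff : ∀ v, v ≠ 0 → ∀ i, φ v i = 0 ↔ v i = 0
  dotProduct_symm : ∀ v w, v ≠ 0 → w ≠ 0 → φ v ⬝ᵥ w = 0 → φ w ⬝ᵥ v = 0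

/-- The map induced by a polarity on the `j`-th coordinates of the points of a coordinate line,
where the `i`-th coordinate is kept equal to `1`; normalised to send `1` to `1`. -/
def coordinateRatio {F ι : Type*} [Field F] [DecidableEq ι] (φ : (ι → F) → ι → F) (i j : ι)
    (y : F) : F :=
  φ (Function.update 1 j y) j / φ (Function.update 1 j y) i * (φ 1 i / φ 1 j)

namespace IsDiagonalPolarity

variable {F ι : Type*} [Field F] [Fintype ι] {φ : (ι → F) → ι → F} {i j k : ι}

theorem mul_eq_mul (h : IsDiagonalPolarity φ) {v w : ι → F} (hv : v ≠ 0) (hw : w ≠ 0)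
    (hij : i ≠ j) (hvw : v i * w j = v j * w i) : φ v i * φ w j = φ v j * φ w i := by
  classical
  let u : ι → F := Pi.single i (φ v j) - Pi.single j (φ v i)
  have hφu (x : ι → F) : φ x ⬝ᵥ u = φ x i * φ v j - φ x j * φ v i := by
    rw [dotProduct_sub, dotProduct_single, dotProduct_single]
  rcases eq_or_ne u 0 with hu | hu
  · have hi := congrFun hu i
    have hj := congrFun hu j
    simp only [u, Pi.sub_apply, Pi.single_eq_same, Pi.single_eq_of_ne hij,
      Pi.single_eq_of_ne hij.symm, Pi.zero_apply, sub_zero, zero_sub, neg_eq_zero] at hi hj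
    rw [hi, hj, zero_mul, zero_mul]
  have hu_dot (x : ι → F) : φ u ⬝ᵥ x = φ u i * x i + φ u j * x j := by
    refine Fintype.sum_eq_add i j hij fun k hk ↦ ?_
    rw [(h.apply_eq_zero_iff u hu k).2 (by simp [u, hk.1, hk.2]), zero_mul]
  have huv : φ u ⬝ᵥ v = 0 := h.dotProduct_symm v u hv hu (by rw [hφu]; ring)
  have huw : φ u ⬝ᵥ w = 0 := by
    rw [hu_dot] at huv ⊢
    have hvi : v i * (φ u i * w i + φ u j * w j) = 0 := by
      linear_combination w i * huv + φ u j * hvw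
    have hvj : v j * (φ u i * w i + φ u j * w j) = 0 := by
      linear_combination w j * huv - φ u i * hvw
    by_contra hne
    have hi := (h.apply_eq_zero_iff v hv i).2 ((mul_eq_zero.1 hvi).resolve_right hne)
    have hj := (h.apply_eq_zero_iff v hv j).2 ((mul_eq_zero.1 hvj).resolve_right hne)
    exact hu (by simp only [u, hi, hj, Pi.single_zero, sub_zero])
  have hwu := h.dotProduct_symm u w hu hw huw
  rw [hφu] at hwu
  linear_combination -hwu

theorem apply_ne_zero (h : IsDiagonalPolarity φ) {v : ι → F} (hv : v i ≠ 0) : φ v i ≠ 0 :=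
  (h.apply_eq_zero_iff v (fun h0 ↦ hv (congrFun h0 i)) i).not.2 hv

theorem apply_one_ne_zero (h : IsDiagonalPolarity φ) (i : ι) : φ 1 i ≠ 0 :=
  h.apply_ne_zero (by simp)

variable [DecidableEq ι]

theorem apply_div_apply (h : IsDiagonalPolarity φ) (hij : i ≠ j) {v : ι → F} (hv : v i ≠ 0) :
    φ v j / φ v i = coordinateRatio φ i j (v j / v i) * (φ 1 j / φ 1 i) := by
  let w : ι → F := Function.update 1 j (v j / v i)
  have hwi : w i = 1 := by simp [w, hij]
  have hwj : w j = v j / v i := by simp [w]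
  have hw : w i ≠ 0 := hwi ▸ one_ne_zero
  have hvw := h.mul_eq_mul (v := v) (w := w) (fun h0 ↦ hv (congrFun h0 i))
    (fun h0 ↦ hw (congrFun h0 i)) hij (by rw [hwi, hwj]; field_simp)
  have := h.apply_one_ne_zero i
  have := h.apply_one_ne_zero j
  have := h.apply_ne_zero hv
  have := h.apply_ne_zero hw
  have hratio : coordinateRatio φ i j (v j / v i) = φ w j / φ w i * (φ 1 i / φ 1 j) := rfl
  rw [hratio]
  field_simp
  linear_combination -hvw

theorem coordinateRatio_zero (h : IsDiagonalPolarity φ) (hij : i ≠ j) :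
    coordinateRatio φ i j 0 = 0 := by
  have hne : Function.update (1 : ι → F) j 0 ≠ 0 := fun h0 ↦ by
    simpa [hij] using congrFun h0 i
  rw [coordinateRatio, (h.apply_eq_zero_iff _ hne j).2 (by simp), zero_div, zero_mul]

theorem coordinateRatio_one (h : IsDiagonalPolarity φ) (i j : ι) :
    coordinateRatio φ i j 1 = 1 := by
  have := h.apply_one_ne_zero i
  have := h.apply_one_ne_zero j
  have hone : Function.update (1 : ι → F) j 1 = 1 := Function.update_eq_self j (1 : ι → F)
  rw [coordinateRatio, hone]
  field_simp

theorem coordinateRatio_mul (h : IsDiagonalPolarity φ) (hij : i ≠ j) (hik : i ≠ k) (hjk : j ≠ k)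
    (y z : F) :
    coordinateRatio φ i j (y * z) = coordinateRatio φ k j y * coordinateRatio φ i k z := by
  rcases eq_or_ne z 0 with rfl | hz
  · rw [mul_zero, h.coordinateRatio_zero hij, h.coordinateRatio_zero hik, mul_zero]
  let v : ι → F := Function.update (Function.update 1 k z) j (y * z)
  have hvi : v i = 1 := by simp [v, hij, hik]
  have hvj : v j = y * z := by simp [v]
  have hvk : v k = z := by simp [v, hjk.symm]
  have hvi0 : v i ≠ 0 := hvi ▸ one_ne_zero
  have hvk0 : v k ≠ 0 := hvk ▸ hz
  have hratio_ij := h.apply_div_apply hij hvi0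
  have hratio_ik := h.apply_div_apply hik hvi0
  have hratio_kj := h.apply_div_apply hjk.symm hvk0
  rw [hvi, hvj, div_one] at hratio_ij
  rw [hvi, hvk, div_one] at hratio_ik
  rw [hvj, hvk, mul_div_cancel_right₀ y hz] at hratio_kj
  have hj := h.apply_one_ne_zero j
  have hi := h.apply_one_ne_zero i
  have hk := h.apply_one_ne_zero k
  have hvk' := h.apply_ne_zero hvk0
  refine mul_right_cancel₀ (div_ne_zero hj hi) ?_
  rw [← hratio_ij, ← div_mul_div_cancel₀ hvk', hratio_kj, hratio_ik]
  field_simp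

variable {φ : (Fin 3 → F) → Fin 3 → F} {i j : Fin 3}

theorem coordinateRatio_eq (h : IsDiagonalPolarity φ) (hij : i ≠ j) (y : F) :
    coordinateRatio φ i j y = coordinateRatio φ 0 1 y := by
  have hleft {i j k : Fin 3} (hij : i ≠ j) (hik : i ≠ k) (hjk : j ≠ k) :
      coordinateRatio φ i j y = coordinateRatio φ k j y := by
    simpa [h.coordinateRatio_one] using h.coordinateRatio_mul hij hik hjk y 1
  have hright {i j k : Fin 3} (hij : i ≠ j) (hik : i ≠ k) (hjk : j ≠ k) :
      coordinateRatio φ i j y = coordinateRatio φ i k y := by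
    simpa [h.coordinateRatio_one] using h.coordinateRatio_mul hij hik hjk 1 y
  have h21 : coordinateRatio φ 2 1 y = coordinateRatio φ 0 1 y :=
    hleft (by decide) (by decide) (by decide)
  have h20 : coordinateRatio φ 2 0 y = coordinateRatio φ 2 1 y :=
    hright (by decide) (by decide) (by decide)
  have h10 : coordinateRatio φ 1 0 y = coordinateRatio φ 2 0 y :=
    hleft (by decide) (by decide) (by decide)
  have h12 : coordinateRatio φ 1 2 y = coordinateRatio φ 1 0 y :=
    hright (by decide) (by decide) (by decide)
  have h02 : coordinateRatio φ 0 2 y = coordinateRatio φ 1 2 y :=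
    hleft (by decide) (by decide) (by decide)
  fin_cases i <;> fin_cases j <;> simp_all

theorem exists_monoidWithZeroHom (h : IsDiagonalPolarity φ) :
    ∃ σ : F →*₀ F, ∀ v w, v ≠ 0 → (φ v ⬝ᵥ w = 0 ↔ ∑ j, φ 1 j * σ (v j) * w j = 0) := by
  let σ : F →*₀ F :=
    { toFun := coordinateRatio φ 0 1
      map_zero' := h.coordinateRatio_zero (by decide)
      map_one' := h.coordinateRatio_one 0 1
      map_mul' y z := by
        rw [h.coordinateRatio_mul (k := 2) (by decide) (by decide) (by decide),
          h.coordinateRatio_eq (by decide), h.coordinateRatio_eq (i := 0) (j := 2) (by decide)] }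
  refine ⟨σ, fun v w hv ↦ ?_⟩
  obtain ⟨i, hi⟩ := Function.ne_iff.1 hv
  have hφi := h.apply_ne_zero hi
  have hone := h.apply_one_ne_zero i
  have hσi : σ (v i) ≠ 0 := map_ne_zero σ |>.2 hi
  have hcoord (j) : φ v j = φ v i / (φ 1 i * σ (v i)) * (φ 1 j * σ (v j)) := by
    rcases eq_or_ne i j with rfl | hij
    · field_simp
    have hratio := h.apply_div_apply hij hi
    have hσ : coordinateRatio φ i j (v j / v i) = σ (v j / v i) := h.coordinateRatio_eq hij _
    rw [hσ, map_div₀] at hratio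
    field_simp at hratio ⊢
    linear_combination hratio
  have hsum : φ v ⬝ᵥ w = φ v i / (φ 1 i * σ (v i)) * ∑ j, φ 1 j * σ (v j) * w j := by
    rw [dotProduct, Finset.mul_sum]
    exact Finset.sum_congr rfl fun j _ ↦ by rw [hcoord j]; ring
  rw [hsum, mul_eq_zero, or_iff_right (div_ne_zero hφi (mul_ne_zero hone hσi))]

end IsDiagonalPolarity

theorem apply_neg_div_mul_apply_of_symm {F ι : Type*} [Field F] [Fintype ι] (σ : F →*₀ F)
    {d : ι → F} (hsymm : ∀ v w : ι → F, v ≠ 0 → w ≠ 0 →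
      ∑ j, d j * σ (v j) * w j = 0 → ∑ j, d j * σ (w j) * v j = 0)
    {i j : ι} (hij : i ≠ j) (hi : d i ≠ 0) (y : F) :
    σ (-(d j / d i) * σ y) = -(d j / d i) * y := by
  classical
  let e : F → F → ι → F := fun x y ↦ Pi.single i x + Pi.single j y
  have hei (x y : F) : e x y i = x := by simp [e, hij]
  have hej (x y : F) : e x y j = y := by simp [e, hij.symm]
  have hsum (x x' y y' : F) :
      ∑ k, d k * σ (e x y k) * e x' y' k = d i * σ x * x' + d j * σ y * y' := by
    rw [Fintype.sum_eq_add i j hij fun k hk ↦ by simp [e, hk.1, hk.2], hei, hei, hej, hej]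
  have hv : e 1 y ≠ 0 := fun h0 ↦ by simpa [hei] using congrFun h0 i
  have hw : e (-(d j / d i) * σ y) 1 ≠ 0 := fun h0 ↦ by simpa [hej] using congrFun h0 j
  have h := hsymm _ _ hv hw (by rw [hsum, map_one]; field_simp; ring)
  rw [hsum, map_one] at h
  refine mul_left_cancel₀ hi ?_
  field_simp at h ⊢
  linear_combination h

theorem exists_ringHom_of_symm {F : Type*} [Field F] (σ : F →*₀ F) {d : Fin 3 → F}
    (hd : ∀ i, d i ≠ 0)
    (hsymm : ∀ v w : Fin 3 → F, v ≠ 0 → w ≠ 0 →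
      ∑ j, d j * σ (v j) * w j = 0 → ∑ j, d j * σ (w j) * v j = 0) :
    ∃ τ : F →+* F, (∀ x, τ x = σ x) ∧ Function.Involutive τ ∧ ∀ i, τ (d i / d 0) = d i / d 0 := by
  let c : Fin 3 → F := fun i ↦ -(d i / d 0)
  have hc (i) : c i ≠ 0 := neg_ne_zero.2 (div_ne_zero (hd i) (hd 0))
  have hdc (i) : d i = -(c i * d 0) := by simp only [c]; field_simp [hd 0]
  have hpair (i : Fin 3) (hi : i ≠ 0) (y : F) : σ (c i * σ y) = c i * y :=
    apply_neg_div_mul_apply_of_symm σ hsymm hi.symm (hd 0) y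
  have hσc (i) (hi : i ≠ 0) : σ (c i) = c i := by simpa using hpair i hi 1
  have hinv (y) : σ (σ y) = y := by
    have := hpair 1 (by decide) y
    rwa [map_mul, hσc 1 (by decide), mul_right_inj' (hc 1)] at this
  -- Incidence of `(1, 1, 1)` and `(x + y, x / c 1, y / c 2)`.
  have hadd (x y) : σ (x + y) = σ x + σ y := by
    rcases eq_or_ne x 0 with rfl | hx
    · rw [zero_add, map_zero, zero_add]
    have hw : ![x + y, x / c 1, y / c 2] ≠ 0 := fun h0 ↦ div_ne_zero hx (hc 1) (congrFun h0 1)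
    have h := hsymm 1 _ one_ne_zero hw
    simp only [Fin.sum_univ_three, Pi.one_apply, map_one, mul_one, Matrix.cons_val, map_div₀,
      hσc 1 (by decide), hσc 2 (by decide), hdc 1, hdc 2] at h
    have hc1 := hc 1
    have hc2 := hc 2
    have hσ := h (by field_simp; ring)
    field_simp at hσ
    exact sub_eq_zero.1 ((mul_eq_zero.1 (by linear_combination hσ)).resolve_left (hd 0))
  let τ : F →+* F := { σ with map_zero' := map_zero σ, map_add' := hadd }
  refine ⟨τ, fun _ ↦ rfl, hinv, fun i ↦ ?_⟩
  rcases eq_or_ne i 0 with rfl | hi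
  · rw [div_self (hd 0), map_one]
  · rw [← neg_inj, ← map_neg]
    exact hσc i hi

theorem IsDiagonalPolarity.exists_involutive_ringHom {F : Type*} [Field F]
    {φ : (Fin 3 → F) → Fin 3 → F} (h : IsDiagonalPolarity φ) :
    ∃ (σ : F →+* F) (d : Fin 3 → F), Function.Involutive σ ∧ (∀ i, d i ≠ 0) ∧
      (∀ i, σ (d i) = d i) ∧ ∀ v w, v ≠ 0 → (φ v ⬝ᵥ w = 0 ↔ ∑ j, d j * σ (v j) * w j = 0) := by
  obtain ⟨σ, hσ⟩ := h.exists_monoidWithZeroHom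
  have hone := h.apply_one_ne_zero
  obtain ⟨τ, hτσ, hinv, hd⟩ := exists_ringHom_of_symm σ hone fun v w hv hw ↦ by
    rw [← hσ v w hv, ← hσ w v hw]
    exact h.dotProduct_symm v w hv hw
  refine ⟨τ, fun i ↦ φ 1 i / φ 1 0, hinv, fun i ↦ div_ne_zero (hone i) (hone 0), hd,
    fun v w hv ↦ ?_⟩
  have hsum : ∑ j, φ 1 j / φ 1 0 * τ (v j) * w j = (∑ j, φ 1 j * σ (v j) * w j) / φ 1 0 := by
    rw [Finset.sum_div]
    exact Finset.sum_congr rfl fun j _ ↦ by rw [hτσ]; ring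
  rw [hσ v w hv, hsum, div_eq_zero_iff, or_iff_left (hone 0)]

end DiagonalPolarities

section InvolutionsOfFiniteFields

theorem apply_eq_pow_of_involutive {F : Type*} [Field F] [Fintype F] {q : ℕ}
    (hF : Fintype.card F = q ^ 2) {σ : F →+* F} (hσ : Function.Involutive σ)
    (hne : ∃ x, σ x ≠ x) (x : F) : σ x = x ^ q := by
  obtain ⟨p, hp⟩ := CharP.exists F
  have hprime : Fact p.Prime := ⟨CharP.char_is_prime F p⟩
  let _ : Algebra (ZMod p) F := ZMod.algebra F p
  let s : F ≃ₐ[ZMod p] F := AlgEquiv.ofRingEquiv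
    (f := RingEquiv.ofRingHom σ σ (RingHom.ext hσ) (RingHom.ext hσ))
    fun r ↦ RingHom.congr_fun (Subsingleton.elim (σ.comp (algebraMap (ZMod p) F)) _) r
  obtain ⟨⟨i, hi_lt⟩, hi⟩ :=
    (FiniteField.bijective_frobeniusAlgEquivOfAlgebraic_pow (ZMod p) F).2 s
  simp only at hi
  have hdvd : finrank (ZMod p) F ∣ 2 * i := by
    rw [← FiniteField.orderOf_frobeniusAlgEquivOfAlgebraic, orderOf_dvd_iff_pow_eq_one, two_mul,
      pow_add, hi]
    exact AlgEquiv.ext hσ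
  have hi0 : i ≠ 0 := by
    rintro rfl
    obtain ⟨y, hy⟩ := hne
    exact hy (AlgEquiv.congr_fun hi y).symm
  have hfinrank : 2 * i = finrank (ZMod p) F := by
    obtain ⟨k, hk⟩ := hdvd
    have : k = 1 := by
      rcases k with _ | _ | k
      · omega
      · rfl
      · nlinarith
    rw [hk, this, mul_one]
  have hq : q = p ^ i := by
    refine Nat.pow_left_injective two_ne_zero ?_
    simp only
    rw [← hF, Module.card_eq_pow_finrank (K := ZMod p), ZMod.card, ← hfinrank, mul_comm, pow_mul]
  calc σ x = (FiniteField.frobeniusAlgEquivOfAlgebraic (ZMod p) F ^ i) x := by rw [hi]; rfl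
    _ = x ^ q := by
      rw [AlgEquiv.coe_pow, FiniteField.coe_frobeniusAlgEquivOfAlgebraic_iterate, ZMod.card, hq]

end InvolutionsOfFiniteFields

section HermitianForm

theorem dotProduct_apply_basis {F E ι : Type*} [Field F] [AddCommGroup E] [Module F E] [Fintype ι]
    (b : Basis ι F E) (f : E →ₗ[F] F) (w : ι → F) :
    (fun i ↦ f (b i)) ⬝ᵥ w = f (b.equivFun.symm w) := by
  rw [b.equivFun_symm_apply, map_sum]
  exact Finset.sum_congr rfl fun i _ ↦ by rw [map_smul, smul_eq_mul, mul_comm]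

namespace IsCodeUnital

variable {F E : Type*} [Field F] [Fintype F] [AddCommGroup E] [Module F E] {q : ℕ} {B : Set E}
  {f : E → E →ₗ[F] F} {b : Basis (Fin 3) F E}

theorem exists_mem_notMem (h : IsCodeUnital F q B) {W : Submodule F E} (hW : 1 < finrank F W) :
    ∃ R ∈ W, R ≠ 0 ∧ R ∉ B := by
  obtain ⟨u, w, huw⟩ := exists_linearIndependent_pair (F := F) (E := W) hW
  have huw' := linearIndependent_pair_coe huw
  obtain ⟨x, hx⟩ := h.exists_smul_add_notMem huw'
  exact ⟨x • u + w, W.add_mem (W.smul_mem x u.2) w.2,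
    ((linearIndependent_pair_shift_iff x).2 huw').ne_zero 0, hx⟩

theorem exists_orthogonal_triple (h : IsCodeUnital F q B) (f : E → E →ₗ[F] F) :
    ∃ R S T, R ≠ 0 ∧ S ≠ 0 ∧ T ≠ 0 ∧ R ∉ B ∧ S ∉ B ∧ f R S = 0 ∧ f R T = 0 ∧ f S T = 0 := by
  have := h.finite
  obtain ⟨R, -, hR0, hR⟩ := h.exists_mem_notMem (W := ⊤) (by rw [finrank_top, h.finrank_eq]; simp)
  have hker : 1 < finrank F (f R).ker := by
    have hrange := (f R).finrank_range_add_finrank_ker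
    have hle := (f R).range.finrank_le
    rw [finrank_self] at hle
    rw [h.finrank_eq] at hrange
    omega
  obtain ⟨S, hRS, hS0, hS⟩ := h.exists_mem_notMem hker
  have hprod : ((f R).prod (f S)).ker ≠ ⊥ := LinearMap.ker_ne_bot_of_finrank_lt (by
    rw [h.finrank_eq, Module.finrank_prod, finrank_self]; simp)
  obtain ⟨T, hT, hT0⟩ := Submodule.exists_mem_ne_zero_of_ne_bot hprod
  obtain ⟨hRT, hST⟩ := Prod.mk_eq_zero.1 (LinearMap.mem_ker.1 hT)
  exact ⟨R, S, T, hR0, hS0, hT0, hR, hS, LinearMap.mem_ker.1 hRS, hRT, hST⟩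

theorem exists_orthogonal_basis (h : IsCodeUnital F q B)
    (hf : ∀ R, R ≠ 0 → IsPolarForm B R (f R)) :
    ∃ b : Basis (Fin 3) F E, ∀ i j, f (b i) (b j) = 0 ↔ i ≠ j := by
  have := h.finite
  obtain ⟨R, S, T, hR0, hS0, hT0, hR, hS, hRS, hRT, hST⟩ := h.exists_orthogonal_triple f
  have hsymm {R S : E} (hR : R ≠ 0) (hS : S ≠ 0) : f R S = 0 → f S R = 0 :=
    (hf R hR).apply_eq_zero_symm (hf S hS) h hS
  have hRR : f R R ≠ 0 := (hf R hR0).apply_self_eq_zero_iff.not.2 hR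
  have hSS : f S S ≠ 0 := (hf S hS0).apply_self_eq_zero_iff.not.2 hS
  have hSR := hsymm hR0 hS0 hRS
  have hTR := hsymm hR0 hT0 hRT
  have hTS := hsymm hS0 hT0 hST
  have hli : LinearIndependent F ![R, S, T] := linearIndependent_triple_iff.2 fun x y z hxyz ↦ by
    have hx : x = 0 := by simpa [hRS, hRT, hRR] using congrArg (f R) hxyz
    have hy : y = 0 := by simpa [hSR, hST, hSS] using congrArg (f S) hxyz
    exact ⟨hx, hy, by simpa [hx, hy, hT0] using hxyz⟩
  have hcard : Fintype.card (Fin 3) = finrank F E := by rw [h.finrank_eq, Fintype.card_fin]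
  let b := basisOfLinearIndependentOfCardEqFinrank hli hcard
  have hb : ⇑b = ![R, S, T] := coe_basisOfLinearIndependentOfCardEqFinrank hli hcard
  have hTT : f T T ≠ 0 := fun hTT ↦ (hf T hT0).ne_zero (b.ext fun i ↦ by
    fin_cases i <;> simp [hb, hTR, hTS, hTT])
  refine ⟨b, fun i j ↦ ?_⟩
  rw [hb]
  fin_cases i <;> fin_cases j <;> simp [*]

theorem isDiagonalPolarity (h : IsCodeUnital F q B) (hf : ∀ R, R ≠ 0 → IsPolarForm B R (f R))
    (hb : ∀ i j, f (b i) (b j) = 0 ↔ i ≠ j) :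
    IsDiagonalPolarity fun v i ↦ f (b.equivFun.symm v) (b i) := by
  have hsymm {R S : E} (hR : R ≠ 0) (hS : S ≠ 0) : f R S = 0 → f S R = 0 :=
    (hf R hR).apply_eq_zero_symm (hf S hS) h hS
  have hne {v : Fin 3 → F} (hv : v ≠ 0) : b.equivFun.symm v ≠ 0 :=
    b.equivFun.symm.map_ne_zero_iff.2 hv
  refine ⟨fun v hv i ↦ ?_, fun v w hv hw hvw ↦ ?_⟩
  · have hcoord : f (b i) (b.equivFun.symm v) = v i * f (b i) (b i) := by
      rw [b.equivFun_symm_apply, map_sum, Finset.sum_eq_single i]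
      · rw [map_smul, smul_eq_mul]
      · intro j _ hji
        rw [map_smul, (hb i j).2 hji.symm, smul_zero]
      · simp
    have hbi : f (b i) (b i) ≠ 0 := (hb i i).not.2 (not_not.2 rfl)
    rw [← or_iff_left (a := v i = 0) hbi, ← mul_eq_zero, ← hcoord]
    exact ⟨hsymm (hne hv) (b.ne_zero i), hsymm (b.ne_zero i) (hne hv)⟩
  · rw [dotProduct_apply_basis] at hvw ⊢
    exact hsymm (hne hv) (hne hw) hvw

theorem exists_apply_ne_self (h : IsCodeUnital F q B) (hf : ∀ R, R ≠ 0 → IsPolarForm B R (f R))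
    (hb : ∀ i j, f (b i) (b j) = 0 ↔ i ≠ j) {σ : F →+* F} {d : Fin 3 → F} (hd : d 0 ≠ 0)
    (hB : ∀ v, v ≠ 0 → (b.equivFun.symm v ∈ B ↔ ∑ i, d i * σ (v i) * v i = 0)) :
    ∃ x, σ x ≠ x := by
  classical
  by_contra! hσ
  have hnotMem (i) : b i ∉ B :=
    (hf _ (b.ne_zero i)).apply_self_eq_zero_iff.not.1 ((hb i i).not.2 (not_not.2 rfl))
  have hli : LinearIndependent F ![b 0, b 1] := by
    convert b.linearIndependent.comp ![0, 1] (by decide) using 1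
    ext i
    fin_cases i <;> rfl
  have hcard := (hf _ (b.ne_zero 0)).card_affineTrace_eq h hli (hnotMem 0) (hnotMem 1)
    ((hb 0 1).2 (by decide))
  have hsub : affineTrace F B (b 0) (b 1) ⊆ (Polynomial.nthRoots 2 (-(d 1 / d 0))).toFinset := by
    intro x hx
    have hv : b.equivFun.symm ![x, 1, 0] = x • b 0 + b 1 := by
      simp [b.equivFun_symm_apply, Fin.sum_univ_three]
    rw [mem_affineTrace, ← hv, hB _ fun h0 ↦ one_ne_zero (congrFun h0 1)] at hx
    simp only [hσ, Fin.sum_univ_three, Matrix.cons_val] at hx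
    rw [Multiset.mem_toFinset, Polynomial.mem_nthRoots two_pos]
    field_simp
    linear_combination hx
  have hle := (Finset.card_le_card hsub).trans
    ((Multiset.toFinset_card_le _).trans (Polynomial.card_nthRoots 2 _))
  have := h.three_le
  omega

theorem exists_hermitian_form (h : IsCodeUnital F q B) :
    ∃ (b : Basis (Fin 3) F E) (d : Fin 3 → F), (∀ i, d i ≠ 0) ∧ (∀ i, d i ^ q = d i) ∧
      ∀ v, v ≠ 0 → (b.equivFun.symm v ∈ B ↔ ∑ i, d i * v i ^ q * v i = 0) := by
  choose! f hf using fun R (hR : R ≠ 0) ↦ h.exists_isPolarForm hR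
  obtain ⟨b, hb⟩ := h.exists_orthogonal_basis hf
  obtain ⟨σ, d, hσ, hd0, hd, hform⟩ := (h.isDiagonalPolarity hf hb).exists_involutive_ringHom
  have hne {v : Fin 3 → F} (hv : v ≠ 0) : b.equivFun.symm v ≠ 0 :=
    b.equivFun.symm.map_ne_zero_iff.2 hv
  have hB (v : Fin 3 → F) (hv : v ≠ 0) :
      b.equivFun.symm v ∈ B ↔ ∑ i, d i * σ (v i) * v i = 0 := by
    rw [← hform v v hv, dotProduct_apply_basis, (hf _ (hne hv)).apply_self_eq_zero_iff]
  have hpow := apply_eq_pow_of_involutive h.card_field hσ (h.exists_apply_ne_self hf hb (hd0 0) hB)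
  simp only [hpow] at hd hB
  exact ⟨b, d, hd0, hd, hB⟩

end IsCodeUnital

end HermitianForm

section VectorCones

theorem ncard_sdiff_zero_of_finrank_eq_one {F E : Type*} [Field F]
    [AddCommGroup E] [Module F E] [Finite E] {W : Submodule F E} (hW : finrank F W = 1) :
    ((W : Set E) \ {0}).ncard = Nat.card F - 1 := by
  rw [Set.ncard_sdiff_singleton_of_mem W.zero_mem]
  exact congrArg (· - 1) ((natCard_eq_pow_finrank (K := F) (V := W)).trans (by rw [hW, pow_one]))

variable {F : Type} [Field F] {n : ℕ}

namespace ProjPoint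

/-- The projective point spanned by a nonzero vector. -/
def ofVector (v : Fin n → F) (hv : v ≠ 0) : ProjPoint F n :=
  ⟨Submodule.span F {v}, finrank_span_singleton hv⟩

theorem exists_ne_zero_mem (P : ProjPoint F n) : ∃ v ∈ P.1, v ≠ 0 :=
  P.1.exists_mem_ne_zero_of_ne_bot fun h ↦ zero_ne_one (by rw [← P.2, h, finrank_bot])

theorem eq_ofVector (P : ProjPoint F n) {v : Fin n → F} (hv : v ≠ 0) (hvP : v ∈ P.1) :
    P = ofVector v hv :=
  Subtype.ext (Submodule.eq_of_le_of_finrank_eq (by simpa [ofVector] using hvP)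
    (by rw [P.2, (ofVector v hv).2])).symm

end ProjPoint

/-- The set of nonzero vectors of `F ^ n` that represent a point of `S`. -/
def vectorCone (S : Set (ProjPoint F n)) : Set (Fin n → F) :=
  {v | ∃ hv : v ≠ 0, ProjPoint.ofVector v hv ∈ S}

variable {S : Set (ProjPoint F n)} {v : Fin n → F}

theorem mem_vectorCone_iff_ofVector_mem (hv : v ≠ 0) :
    v ∈ vectorCone S ↔ ProjPoint.ofVector v hv ∈ S :=
  ⟨fun ⟨_, h⟩ ↦ h, fun h ↦ ⟨hv, h⟩⟩

theorem mem_vectorCone_iff_mem {P : ProjPoint F n} (hv : v ≠ 0) (hvP : v ∈ P.1) :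
    v ∈ vectorCone S ↔ P ∈ S := by
  rw [mem_vectorCone_iff_ofVector_mem hv, ← P.eq_ofVector hv hvP]

theorem mem_vectorCone_pointsIn {W : Submodule F (Fin n → F)} :
    v ∈ vectorCone (pointsIn F n W) ↔ v ≠ 0 ∧ v ∈ W :=
  ⟨fun ⟨hv, h⟩ ↦ ⟨hv, W.span_singleton_le_iff_mem v |>.1 h⟩,
    fun ⟨hv, h⟩ ↦ ⟨hv, W.span_singleton_le_iff_mem v |>.2 h⟩⟩

theorem isCone_vectorCone (S : Set (ProjPoint F n)) : IsCone F (vectorCone S) where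
  zero_notMem := fun ⟨h, _⟩ ↦ h rfl
  smul_mem := fun c hc v ⟨hv, h⟩ ↦ by
    refine (mem_vectorCone_iff_mem (smul_ne_zero hc hv) ?_).2 h
    exact Submodule.smul_mem _ c (Submodule.mem_span_singleton_self v)

variable [Finite F]

instance : Finite (ProjPoint F n) := Subtype.finite

theorem ncard_vectorCone_inter (S : Set (ProjPoint F n)) (W : Submodule F (Fin n → F)) :
    (vectorCone S ∩ W).ncard = (Nat.card F - 1) * secant F n S W := by
  have hunion : vectorCone S ∩ W = ⋃ P ∈ S ∩ pointsIn F n W, (P.1 : Set (Fin n → F)) \ {0} := by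
    ext v
    simp only [Set.mem_iUnion, exists_prop]
    constructor
    · rintro ⟨⟨hv, hS⟩, hW⟩
      exact ⟨_, ⟨hS, W.span_singleton_le_iff_mem v |>.2 hW⟩,
        Submodule.mem_span_singleton_self v, hv⟩
    · rintro ⟨P, ⟨hS, hW⟩, hvP, hv⟩
      exact ⟨(mem_vectorCone_iff_mem hv hvP).2 hS, hW hvP⟩
  have hdisjoint : (S ∩ pointsIn F n W).PairwiseDisjoint
      fun P ↦ (P.1 : Set (Fin n → F)) \ {0} := by
    intro P _ Q _ hPQ
    refine Set.disjoint_left.2 fun v hvP hvQ ↦ hPQ ?_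
    rw [P.eq_ofVector hvP.2 hvP.1, Q.eq_ofVector hvP.2 hvQ.1]
  rw [hunion, Set.Finite.ncard_biUnion (Set.toFinite _) (fun _ _ ↦ Set.toFinite _) hdisjoint]
  rw [finsum_mem_congr rfl fun P _ ↦ ncard_sdiff_zero_of_finrank_eq_one P.2,
    finsum_mem_eq_finite_toFinset_sum _ (Set.toFinite _), Finset.sum_const, smul_eq_mul, mul_comm,
    secant, Set.ncard_eq_toFinset_card]

theorem lineCard_vectorCone {u w : Fin n → F} (h : LinearIndependent F ![u, w]) :
    lineCard F (vectorCone S) u w = secant F n S (Submodule.span F {u, w}) := by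
  have hcard : 0 < Nat.card F - 1 := Nat.sub_pos_of_lt Finite.one_lt_card
  refine Nat.eq_of_mul_eq_mul_left hcard ?_
  rw [← ncard_vectorCone_inter, (isCone_vectorCone S).ncard_inter_span_pair h]

end VectorCones

section MomentCode

open Polynomial

/-- The functions on `E` for which the sum over the representatives `u`, `x • u + w` of the points
of a projective line is the same for all lines, namely minus the sum over `E`, and whose moments
along the lines through a point depend polynomially on the line. Both conditions are linear and
hold for the hyperplanes, hence for all codewords, read as functions on the nonzero vectors. -/
def momentCode (F E : Type*) [Field F] [Fintype F] [AddCommGroup E] [Module F E] [Fintype E] :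
    Submodule F (E → F) where
  carrier := {g | (∀ u w, LinearIndependent F ![u, w] →
      g u + ∑ x : F, g (x • u + w) = -∑ v, g v) ∧
    ∀ u v w, LinearIndependent F ![u, v, w] → ∀ k < Fintype.card F - 1, ∃ P : F[X],
      P.natDegree ≤ k ∧ (∀ y, P.eval y = ∑ x : F, g (x • u + (y • v + w)) * x ^ k) ∧
        P.coeff k = ∑ x : F, g (x • u + v) * x ^ k}
  zero_mem' := ⟨by simp, fun _ _ _ _ k _ ↦ ⟨0, by simp, by simp, by simp⟩⟩
  add_mem' := by
    rintro f g ⟨hf, hf'⟩ ⟨hg, hg'⟩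
    refine ⟨fun u w h ↦ ?_, fun u v w h k hk ↦ ?_⟩
    · simp only [Pi.add_apply, Finset.sum_add_distrib]
      linear_combination hf u w h + hg u w h
    · obtain ⟨P, hP, hPeval, hPcoeff⟩ := hf' u v w h k hk
      obtain ⟨Q, hQ, hQeval, hQcoeff⟩ := hg' u v w h k hk
      refine ⟨P + Q, natDegree_add_le_of_degree_le hP hQ, fun y ↦ ?_, ?_⟩
      · simp only [eval_add, hPeval, hQeval, Pi.add_apply, add_mul, Finset.sum_add_distrib]
      · simp only [coeff_add, hPcoeff, hQcoeff, Pi.add_apply, add_mul, Finset.sum_add_distrib]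
  smul_mem' := by
    rintro c g ⟨hg, hg'⟩
    refine ⟨fun u w h ↦ ?_, fun u v w h k hk ↦ ?_⟩
    · simp only [Pi.smul_apply, smul_eq_mul, ← Finset.mul_sum]
      linear_combination c * hg u w h
    · obtain ⟨P, hP, hPeval, hPcoeff⟩ := hg' u v w h k hk
      refine ⟨C c * P, (natDegree_C_mul_le _ _).trans hP, fun y ↦ ?_, ?_⟩
      · simp only [eval_mul, eval_C, hPeval, Pi.smul_apply, smul_eq_mul, mul_assoc, Finset.mul_sum]
      · simp only [coeff_C_mul, hPcoeff, Pi.smul_apply, smul_eq_mul, mul_assoc, Finset.mul_sum]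

variable {F E : Type*} [Field F] [AddCommGroup E] [Module F E]

theorem exists_eq_ker_of_finrank_add_one [FiniteDimensional F E] {H : Submodule F E}
    (hH : finrank F H + 1 = finrank F E) : ∃ φ : E →ₗ[F] F, H = φ.ker := by
  obtain ⟨φ, hφ, hle⟩ := H.exists_le_ker_of_lt_top <| lt_top_iff_ne_top.2 fun h ↦ by
    rw [h, finrank_top] at hH
    omega
  refine ⟨φ, Submodule.eq_of_le_of_finrank_eq hle ?_⟩
  have := Module.Dual.finrank_ker_add_one_of_ne_zero hφ
  omega

theorem sum_indicator_mul_add_eq_zero_mul_pow [Fintype F] {a : F} (ha : a ≠ 0) (d : F) (k : ℕ) :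
    ∑ x : F, {x | x * a + d = 0}.indicator 1 x * x ^ k = (-(d * a⁻¹)) ^ k := by
  have hroot : {x | x * a + d = 0} = {-(d * a⁻¹)} := by
    ext x
    rw [Set.mem_ofPred_eq, Set.mem_singleton_iff, ← div_eq_mul_inv, ← neg_div, eq_div_iff ha,
      add_eq_zero_iff_eq_neg]
  rw [hroot, Finset.sum_eq_single (-(d * a⁻¹)) (by simp +contextual) (by simp)]
  simp

theorem sum_indicator_one_eq_ncard {R α : Type*} [NonAssocSemiring R] [Fintype α] (s : Set α) :
    ∑ a, s.indicator (1 : α → R) a = s.ncard := by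
  classical
  simp [Set.indicator_apply, Finset.sum_boole, Set.ncard_eq_toFinset_card']

section Hyperplanes

variable (φ : E →ₗ[F] F) {u v w : E}

theorem indicator_ker_smul_add (huw : LinearIndependent F ![u, w]) (x : F) :
    {v | v ≠ 0 ∧ φ v = 0}.indicator (1 : E → F) (x • u + w) =
      {x | x * φ u + φ w = 0}.indicator 1 x := by
  have hne : x • u + w ≠ 0 := ((linearIndependent_pair_shift_iff x).2 huw).ne_zero 0
  classical simp [Set.indicator_apply, hne]

theorem indicator_ker_add_sum [Fintype F] (huw : LinearIndependent F ![u, w]) :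
    {v | v ≠ 0 ∧ φ v = 0}.indicator (1 : E → F) u +
      ∑ x : F, {v | v ≠ 0 ∧ φ v = 0}.indicator (1 : E → F) (x • u + w) = 1 := by
  simp only [indicator_ker_smul_add φ huw]
  by_cases hu : φ u = 0
  · have hu1 : {v | v ≠ 0 ∧ φ v = 0}.indicator (1 : E → F) u = 1 :=
      Set.indicator_of_mem (Set.mem_ofPred_eq ▸ ⟨huw.ne_zero 0, hu⟩) 1
    by_cases hw : φ w = 0 <;> simp [hu, hw, hu1]
  · simpa [Set.indicator_of_notMem, hu] using sum_indicator_mul_add_eq_zero_mul_pow hu (φ w) 0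

theorem exists_polynomial_indicator_ker [Fintype F] (h : LinearIndependent F ![u, v, w]) {k : ℕ}
    (hk : k < Fintype.card F - 1) : ∃ P : F[X], P.natDegree ≤ k ∧
      (∀ y, P.eval y =
        ∑ x : F, {v | v ≠ 0 ∧ φ v = 0}.indicator (1 : E → F) (x • u + (y • v + w)) * x ^ k) ∧
      P.coeff k = ∑ x : F, {v | v ≠ 0 ∧ φ v = 0}.indicator (1 : E → F) (x • u + v) * x ^ k := by
  simp only [indicator_ker_smul_add φ (linearIndependent_pair_smul_add h _),
    indicator_ker_smul_add φ (linearIndependent_pair_of_triple h)]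
  by_cases hu : φ u = 0
  · have hconst (d : F) : ∑ x : F, {x | x * φ u + d = 0}.indicator 1 x * x ^ k = 0 := by
      by_cases hd : d = 0 <;> simp [hu, hd, FiniteField.sum_pow_lt_card_sub_one F k hk]
    exact ⟨0, by simp, fun y ↦ by rw [hconst, eval_zero], by rw [hconst, coeff_zero]⟩
  · simp only [sum_indicator_mul_add_eq_zero_mul_pow hu]
    have hdeg : (C (-(φ v * (φ u)⁻¹)) * X + C (-(φ w * (φ u)⁻¹))).natDegree ≤ 1 :=
      natDegree_linear_le
    refine ⟨(C (-(φ v * (φ u)⁻¹)) * X + C (-(φ w * (φ u)⁻¹))) ^ k,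
      (natDegree_pow_le_of_le k hdeg).trans (mul_one k).le, fun y ↦ ?_, ?_⟩
    · simp only [eval_pow, eval_add, eval_mul, eval_C, eval_X, map_add, map_smul, smul_eq_mul]
      ring
    · have := coeff_pow_of_natDegree_le (m := k) hdeg
      rw [mul_one] at this
      simpa using this

theorem sum_indicator_ker [Finite F] [Fintype E] (hφ : φ.ker ≠ ⊥) :
    ∑ v, {v | v ≠ 0 ∧ φ v = 0}.indicator (1 : E → F) v = -1 := by
  have := Fintype.ofFinite F
  have hset : {v | v ≠ 0 ∧ φ v = 0} = (φ.ker : Set E) \ {0} := by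
    ext
    simp [and_comm]
  have hcard : (φ.ker : Set E).ncard = Fintype.card F ^ finrank F φ.ker :=
    (natCard_eq_pow_finrank (K := F) (V := φ.ker)).trans (by rw [Nat.card_eq_fintype_card])
  have hrank : finrank F φ.ker ≠ 0 := mt Submodule.finrank_eq_zero.1 hφ
  rw [sum_indicator_one_eq_ncard, hset, Set.ncard_sdiff_singleton_of_mem φ.ker.zero_mem, hcard,
    Nat.cast_pred (pow_pos Fintype.card_pos _), Nat.cast_pow, FiniteField.cast_card_eq_zero,
    zero_pow hrank, zero_sub]

theorem indicator_ker_mem_momentCode [Fintype F] [Fintype E] (hφ : φ.ker ≠ ⊥) :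
    {v | v ≠ 0 ∧ φ v = 0}.indicator 1 ∈ momentCode F E :=
  ⟨fun _ _ h ↦ by rw [indicator_ker_add_sum φ h, sum_indicator_ker φ hφ, neg_neg],
    fun _ _ _ h _ hk ↦ exists_polynomial_indicator_ker φ h hk⟩

end Hyperplanes

end MomentCode

section Codewords

variable {F : Type} [Field F] {n p : ℕ} [Algebra (ZMod p) F]

open Classical in
/-- A function on projective points as a function on vectors that is constant on the nonzero
vectors of each point and vanishes at `0`. -/
noncomputable def coneLift : (ProjPoint F n → ZMod p) →ₗ[ZMod p] (Fin n → F) → F where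
  toFun c v := if hv : v ≠ 0 then algebraMap (ZMod p) F (c (ProjPoint.ofVector v hv)) else 0
  map_add' c d := by
    ext v
    by_cases hv : v = 0 <;> simp [hv]
  map_smul' a c := by
    ext v
    by_cases hv : v = 0 <;> simp [hv, Algebra.smul_def]

theorem coneLift_charVec (S : Set (ProjPoint F n)) :
    coneLift (charVec F p n S) = (vectorCone S).indicator 1 := by
  ext v
  by_cases hv : v = 0
  · simp [coneLift, hv, (isCone_vectorCone S).zero_notMem]
  · by_cases hS : ProjPoint.ofVector v hv ∈ S <;>
      simp [coneLift, charVec, hv, hS, mem_vectorCone_iff_ofVector_mem hv]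

theorem coneLift_mem_momentCode [Fintype F] (hn : 1 < n) {c : ProjPoint F n → ZMod p}
    (hc : c ∈ hypCode F p n) : coneLift c ∈ momentCode F (Fin n → F) := by
  have hle : hypCode F p n ≤
      ((momentCode F (Fin n → F)).restrictScalars (ZMod p)).comap coneLift := by
    refine Submodule.span_le.2 ?_
    rintro _ ⟨H, hH, rfl⟩
    have hH' : finrank F H + 1 = finrank F (Fin n → F) := by
      rw [hH, finrank_fin_fun]
      omega
    obtain ⟨φ, rfl⟩ := exists_eq_ker_of_finrank_add_one hH'
    have hker : φ.ker ≠ ⊥ := fun h ↦ by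
      rw [h, finrank_bot] at hH
      omega
    have hcone : vectorCone (pointsIn F n φ.ker) = {v | v ≠ 0 ∧ φ v = 0} :=
      Set.ext fun _ ↦ mem_vectorCone_pointsIn
    change coneLift (charVec F p n (pointsIn F n φ.ker)) ∈ momentCode F (Fin n → F)
    rw [coneLift_charVec, hcone]
    exact indicator_ker_mem_momentCode φ hker
  exact hle hc

end Codewords

section PlaneSections

variable {F E : Type*} [Field F] [AddCommGroup E] [Module F E] {B : Set E} {W : Submodule F E}

theorem IsCone.preimage_subtype (hB : IsCone F B) (W : Submodule F E) :
    IsCone F (W.subtype ⁻¹' B) where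
  zero_notMem := hB.zero_notMem
  smul_mem := fun c hc v hv ↦ hB.smul_mem c hc v hv

theorem affineTrace_preimage_subtype [Finite F] (u w : W) :
    affineTrace F (W.subtype ⁻¹' B) u w = affineTrace F B (u : E) w := by
  ext
  simp only [mem_affineTrace]
  rfl

theorem lineCard_preimage_subtype [Finite F] (u w : W) :
    lineCard F (W.subtype ⁻¹' B) u w = lineCard F B (u : E) w := by
  rw [lineCard, lineCard, affineTrace_preimage_subtype]
  rfl

theorem sum_indicator_mul_pow_eq_sum_affineTrace [Fintype F] (B : Set E) (u w : E) (k : ℕ) :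
    ∑ x : F, B.indicator 1 (x • u + w) * x ^ k = ∑ x ∈ affineTrace F B u w, x ^ k := by
  classical
  simp only [Set.indicator_apply, Pi.one_apply, ite_mul, one_mul, zero_mul, ← mem_affineTrace,
    Finset.sum_ite_mem, Finset.univ_inter]

theorem natCast_lineCard [Fintype F] (B : Set E) (u w : E) :
    (lineCard F B u w : F) = B.indicator 1 u + ∑ x : F, B.indicator 1 (x • u + w) := by
  have hsum := sum_indicator_mul_pow_eq_sum_affineTrace (F := F) B u w 0
  simp only [pow_zero, mul_one, Finset.sum_const, nsmul_eq_mul] at hsum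
  rw [lineCard, hsum, Nat.cast_add]
  by_cases hu : u ∈ B <;> simp [hu]

theorem isCodeUnital_of_mem_momentCode [Fintype F] [Fintype E] {q : ℕ} (hB : IsCone F B)
    (hcode : B.indicator 1 ∈ momentCode F E) (hcard : (B.ncard : F) = -1) (hq : 3 ≤ q)
    (hF : Fintype.card F = q ^ 2) (hW : finrank F W = 3)
    (hlines : ∀ u ∈ W, ∀ w ∈ W, LinearIndependent F ![u, w] → lineCard F B u w ≤ q + 1) :
    IsCodeUnital F q (W.subtype ⁻¹' B) where
  toIsCone := hB.preimage_subtype W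
  three_le := hq
  card_field := hF
  finrank_eq := hW
  cast_lineCard u w huw := by
    rw [lineCard_preimage_subtype, natCast_lineCard, hcode.1 u w (linearIndependent_pair_coe huw),
      sum_indicator_one_eq_ncard, hcard, neg_neg]
  lineCard_le u w huw := by
    rw [lineCard_preimage_subtype]
    exact hlines u u.2 w w.2 (linearIndependent_pair_coe huw)
  moments u v w h k hk := by
    have hkF : k < Fintype.card F - 1 := by
      have : 2 ≤ q ^ 2 := by nlinarith
      omega
    simpa only [affineTrace_preimage_subtype, sum_indicator_mul_pow_eq_sum_affineTrace,
      Submodule.coe_add, Submodule.coe_smul] using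
      hcode.2 u v w (linearIndependent_triple_coe h) k hkF

end PlaneSections

section ClassicalUnitals

variable {F : Type} [Field F] {n q : ℕ} {π : Submodule F (Fin n → F)} {V : Set (ProjPoint F n)}

theorem secant_eq_pointCard [Finite F] (hπ : finrank F π = 3) :
    secant F n V π = pointCard F (π.subtype ⁻¹' vectorCone V) := by
  have hcard : 0 < Nat.card F - 1 := Nat.sub_pos_of_lt Finite.one_lt_card
  have himage : vectorCone V ∩ π = π.subtype '' (π.subtype ⁻¹' vectorCone V) := by
    rw [Set.image_preimage_eq_inter_range, π.coe_subtype, Subtype.range_coe]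
  refine Nat.eq_of_mul_eq_mul_left hcard ?_
  rw [← ncard_vectorCone_inter, himage, Set.ncard_image_of_injective _ π.subtype_injective,
    ((isCone_vectorCone V).preimage_subtype π).ncard_eq_mul_pointCard hπ]

theorem sum_mul_diagonal_mul_pow {ι : Type*} [Fintype ι] [DecidableEq ι] (d y : ι → F) :
    ∑ i, ∑ j, y i * diagonal d i j * y j ^ q = ∑ i, d i * y i ^ q * y i := by
  refine Finset.sum_congr rfl fun i _ ↦ ?_
  rw [Finset.sum_eq_single i (fun j _ hji ↦ by simp [diagonal_apply_ne' d hji]) (by simp),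
    diagonal_apply_eq]
  ring

theorem isClassicalUnital_of_forall_mem_iff (hq : q ≠ 0) (b : Basis (Fin 3) F π) {d : Fin 3 → F}
    (hd : ∀ i, d i ≠ 0) (hdq : ∀ i, d i ^ q = d i)
    (hV : ∀ v, v ≠ 0 → ((b.equivFun.symm v : Fin n → F) ∈ vectorCone V ↔
      ∑ i, d i * v i ^ q * v i = 0)) :
    IsClassicalUnital F q n π (V ∩ pointsIn F n π) := by
  let e : (Fin 3 → F) →ₗ[F] (Fin n → F) := π.subtype ∘ₗ b.equivFun.symm
  have hker : e.ker = ⊥ := by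
    simp [e, LinearMap.ker_comp]
  have hrange : e.range = π := by
    rw [LinearMap.range_comp_of_range_eq_top _ b.equivFun.symm.range, π.range_subtype]
  refine ⟨e, hker, hrange, diagonal d, ?_, ?_, ?_⟩
  · simpa [det_diagonal, Finset.prod_ne_zero_iff] using hd
  · rw [diagonal_transpose, diagonal_map (f := fun a : F ↦ a ^ q) (zero_pow hq)]
    simp only [hdq]
  · ext P
    simp only [sum_mul_diagonal_mul_pow]
    constructor
    · rintro ⟨hPV, hPπ⟩
      obtain ⟨v, hvP, hv⟩ := P.exists_ne_zero_mem
      obtain ⟨y, rfl⟩ : v ∈ e.range := hrange ▸ hPπ hvP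
      have hy : y ≠ 0 := fun h ↦ hv (by rw [h, map_zero])
      exact ⟨y, hy, congrArg Subtype.val (P.eq_ofVector hv hvP),
        (hV y hy).1 ((mem_vectorCone_iff_mem hv hvP).2 hPV)⟩
    · rintro ⟨y, hy, hP, hy0⟩
      have hyV := (hV y hy).2 hy0
      have hyP : e y ∈ P.1 := hP ▸ Submodule.mem_span_singleton_self _
      refine ⟨(mem_vectorCone_iff_mem hyV.1 hyP).1 hyV, ?_⟩
      change P.1 ≤ π
      rw [hP, π.span_singleton_le_iff_mem]
      exact (b.equivFun.symm y).2

theorem isCodeUnital_vectorCone [Fintype F] {p : ℕ} [CharP F p] (hq : 3 ≤ q)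
    (hF : Fintype.card F = q ^ 2) (hV : V.ncard ≡ 1 [MOD p])
    (hcode : charVec F p n V ∈ hypCode F p n) (hπ : finrank F π = 3)
    (hlines : ∀ ℓ ≤ π, finrank F ℓ = 2 → secant F n V ℓ ≤ q + 1) :
    IsCodeUnital F q (π.subtype ⁻¹' vectorCone V) := by
  let _ := ZMod.algebra F p
  have hn : 1 < n := by
    have := π.finrank_le
    rw [hπ, finrank_fin_fun] at this
    omega
  have hmem := coneLift_mem_momentCode hn hcode
  rw [coneLift_charVec] at hmem
  have hcard : ((vectorCone V).ncard : F) = -1 := by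
    have hcount := ncard_vectorCone_inter V ⊤
    have hVF : (V.ncard : F) = 1 := by
      rw [← Nat.cast_one, CharP.natCast_eq_natCast F p]
      exact hV
    have htop : secant F n V ⊤ = V.ncard := by
      simp [secant, pointsIn]
    rw [Submodule.top_coe, Set.inter_univ, htop, Nat.card_eq_fintype_card] at hcount
    rw [hcount, Nat.cast_mul, Nat.cast_pred Fintype.card_pos, FiniteField.cast_card_eq_zero, hVF]
    ring
  refine isCodeUnital_of_mem_momentCode (isCone_vectorCone V) hmem hcard hq hF hπ
    fun u hu w hw huw ↦ ?_
  rw [lineCard_vectorCone huw]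
  refine hlines _ (Submodule.span_le.2 (Set.pair_subset hu hw)) ?_
  rw [← Matrix.range_cons_cons_empty, finrank_span_eq_card huw, Fintype.card_fin]

theorem IsQuasiHermitian.ncard_modEq_one {p r : ℕ} {V : Set (ProjPoint F (r + 1))}
    (hV : IsQuasiHermitian F q r V) (hpq : p ∣ q) (hr : r ≠ 0) : V.ncard ≡ 1 [MOD p] := by
  have hq : (q : ZMod p) = 0 := (ZMod.natCast_eq_zero_iff q p).2 hpq
  have hcard := congrArg (Int.cast : ℤ → ZMod p) hV.1
  push_cast at hcard
  rw [hq, zero_pow two_ne_zero, zero_pow r.succ_ne_zero, zero_pow hr, zero_add, zero_sub, zero_sub,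
    mul_neg, mul_neg, ← mul_pow] at hcard
  rw [← ZMod.natCast_eq_natCast_iff]
  simpa using hcard

end ClassicalUnitals

theorem stmt8_general {F : Type} [Field F] [Fintype F] {p q n : ℕ} [CharP F p] (hq : 3 ≤ q)
    (hF : Fintype.card F = q ^ 2) {V : Set (ProjPoint F n)} (hV : V.ncard ≡ 1 [MOD p])
    (hcode : charVec F p n V ∈ hypCode F p n) {π : Submodule F (Fin n → F)}
    (hπ : finrank F π = 3)
    (hlines : ∀ ℓ ≤ π, finrank F ℓ = 2 → secant F n V ℓ ≤ q + 1) :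
    IsClassicalUnital F q n π (V ∩ pointsIn F n π) ∧ secant F n V π = q ^ 3 + 1 := by
  have hB : IsCodeUnital F q (π.subtype ⁻¹' vectorCone V) :=
    isCodeUnital_vectorCone hq hF hV hcode hπ hlines
  obtain ⟨b, d, hd, hdq, hmem⟩ := hB.exists_hermitian_form
  exact ⟨isClassicalUnital_of_forall_mem_iff (by omega) b hd hdq hmem,
    (secant_eq_pointCard hπ).trans hB.pointCard_eq_cube_add_one⟩

/-- if a plane `π` meets `V` in at most `q³ + 2q²` points and every
line of `π` meets `π ∩ V` in at most `q + 1` points, then `π ∩ V` is a classical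
unital of `π`; in particular `|π ∩ V| = q³ + 1`. -/
theorem stmt8 (p h q r : ℕ) (hp : p.Prime) (hh : 1 ≤ h) (hq : q = p ^ h) (hq4 : 4 < q)
    (hr : 3 ≤ r)
    (F : Type) [Field F] [Fintype F] (hF : Fintype.card F = q ^ 2)
    (V : Set (ProjPoint F (r + 1))) (hV : IsQuasiHermitian F q r V)
    (hcode : charVec F p (r + 1) V ∈ hypCode F p (r + 1))
    (π : Submodule F (Fin (r + 1) → F)) (hπ : finrank F π = 3)
    (hsize : secant F (r + 1) V π ≤ q ^ 3 + 2 * q ^ 2)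
    (hlines : ∀ ℓ : Submodule F (Fin (r + 1) → F), ℓ ≤ π → finrank F ℓ = 2 →
      secant F (r + 1) V ℓ ≤ q + 1) :
    IsClassicalUnital F q (r + 1) π (V ∩ pointsIn F (r + 1) π) ∧
      secant F (r + 1) V π = q ^ 3 + 1 := by
  have := Fact.mk hp
  have : CharP F p := charP_of_card_eq_prime_pow (f := h * 2) (by rw [hF, hq, pow_mul])
  have hVp := hV.ncard_modEq_one (hq ▸ dvd_pow_self p (by omega)) (by omega)
  exact stmt8_general (by omega) hF hVp hcode hπ hlines
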